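/- arXiv:1706.05589 — 4 statements merged into one kernel-verified Lean document; each statement's English description precedes it below -/
import Mathlib

section
/- (Berger–Klosin–Kramer, restated as Theorem 2.1 of the paper.) Assume that the residue field F_ϖ of O has at least s elements (equivalently #F_ϖ^× ≥ s−1) and that each ideal J_i ⊆ T_i is principal. Then the cardinality of the product of quotients satisfies #(∏_{i=1}^s T_i/J_i) ≥ #(T/J). Moreover, equality holds if and only if the ideal J ⊆ T is principal. -/
/-!
Setting: `O` is the valuation ring of a finite extension of `ℚ_p`, abstracted as a complete
discrete valuation ring with finite residue field of characteristic `p`.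
`A = ∏ i, O^(n i)`, `T ⊆ A` a local complete `O`-subalgebra of full rank (`A/T` finite),
`J ⊆ T` an ideal of finite index, `T_i = φ_i(T)`, `J_i = φ_i(J)`.
-/

open IsLocalRing

set_option synthInstance.maxHeartbeats 1000000
set_option maxHeartbeats 1000000

noncomputable section

namespace Stmt0

variable (p : ℕ) [Fact (Nat.Prime p)]
variable (O : Type) [CommRing O] [IsDomain O] [IsDiscreteValuationRing O]
variable (s : ℕ) (n : Fin s → ℕ)

/-- The ambient algebra `A = ∏_{i=1}^s O^{n_i}`. -/
abbrev A : Type := ∀ i : Fin s, Fin (n i) → O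

/-- The canonical projection `φ_i : A → A_i = O^{n_i}`. -/
def φ (i : Fin s) : A O s n →ₐ[O] (Fin (n i) → O) :=
  Pi.evalAlgHom O (fun i => Fin (n i) → O) i

variable (T : Subalgebra O (A O s n))

/-- `T_i = φ_i(T)`. -/
def Ti (i : Fin s) : Subalgebra O (Fin (n i) → O) := T.map (φ O s n i)

/-- The projection `T → T_i` induced by `φ_i`. -/
def ψ (i : Fin s) : T →ₐ[O] Ti O s n T i :=
  AlgHom.codRestrict ((φ O s n i).comp T.val) (Ti O s n T i)
    (fun x => ⟨x.1, x.2, rfl⟩)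

/-- `J_i = φ_i(J)`, as an ideal of `T_i`. -/
def Ji (J : Ideal T) (i : Fin s) : Ideal (Ti O s n T i) :=
  J.map (ψ O s n T i)

/-!
Each `J_i` is generated by any of its elements outside `𝔪_i J_i`, where `𝔪_i` is the maximal ideal
of `T_i`. The preimages of the `𝔪_i J_i` in `J` are proper submodules, and over a local ring with at
least `s` residue classes `s` proper submodules do not cover a module, so a single `β ∈ J` generates
all the `J_i` at once. Since `T` has finite index in `∏ T_i`, multiplication by the regular element
`β` has the same index on both, that is
`#(T/βT) = #(∏ T_i/βT_i) = #(∏ T_i/J_i)`. As `βT ⊆ J`, the inequality follows, and equality forces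
`J = βT`; conversely a generator of `J` can serve as `β`.
-/

section Avoidance

lemma exists_forall_mem_ne_of_card_lt {α β : Type*} (c : α → β) {S : Finset α}
    (hcard : (S.card : ℕ∞) < ENat.card β) : ∃ d, ∀ i ∈ S, c i ≠ d := by
  by_contra! hall
  have hsurj : Set.univ ⊆ Set.image c S := fun d _ ↦ hall d
  refine hcard.not_ge ?_
  calc ENat.card β = Set.univ.encard := (Set.encard_univ β).symm
    _ ≤ (Set.image c S).encard := Set.encard_le_encard hsurj
    _ ≤ (S : Set α).encard := Set.encard_image_le c S
    _ = S.card := Set.encard_coe_eq_coe_finsetCard S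

variable {R M ι : Type*} [CommRing R] [IsLocalRing R] [AddCommGroup M] [Module R M]

lemma exists_forall_residue_eq_of_add_smul_mem (K : Submodule R M) {x : M} (hx : x ∉ K) (y : M) :
    ∃ c : ResidueField R, ∀ r : R, y + r • x ∈ K → residue R r = c := by
  by_cases hy : ∃ t : R, y + t • x ∈ K
  · obtain ⟨t, ht⟩ := hy
    refine ⟨residue R t, fun r hr ↦ ?_⟩
    have hdiff : (r - t) • x ∈ K := by
      simpa only [add_sub_add_left_eq_sub, ← sub_smul] using K.sub_mem hr ht
    have hnonunit : ¬ IsUnit (r - t) := fun hu ↦ hx ((K.smul_mem_iff_of_isUnit hu).1 hdiff)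
    rwa [← residue_ne_zero_iff_isUnit, not_not, map_sub, sub_eq_zero] at hnonunit
  · exact ⟨0, fun r hr ↦ (hy ⟨r, hr⟩).elim⟩

lemma exists_mem_forall_notMem (N : Submodule R M) (K : ι → Submodule R M) (S : Finset ι)
    (hcard : (S.card : ℕ∞) ≤ ENat.card (ResidueField R)) (hK : ∀ i ∈ S, ¬ N ≤ K i) :
    ∃ x ∈ N, ∀ i ∈ S, x ∉ K i := by
  classical
  induction S using Finset.induction_on with
  | empty => exact ⟨0, N.zero_mem, by simp⟩
  | insert k S hk ih =>
    rw [Finset.forall_mem_insert] at hK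
    have hlt : (S.card : ℕ∞) < ENat.card (ResidueField R) := by
      refine lt_of_lt_of_le ?_ hcard
      exact_mod_cast Finset.card_lt_card (Finset.ssubset_insert hk)
    obtain ⟨x, hxN, hx⟩ := ih hlt.le hK.2
    by_cases hxk : x ∈ K k
    swap
    · exact ⟨x, hxN, Finset.forall_mem_insert .. |>.2 ⟨hxk, hx⟩⟩
    obtain ⟨y, hyN, hyk⟩ := SetLike.not_le_iff_exists.1 hK.1
    -- On the line `y + R x`, each `K i` with `i ∈ S` excludes at most one residue class.
    choose! c hc using fun i (hi : i ∈ S) ↦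
      exists_forall_residue_eq_of_add_smul_mem (K i) (hx i hi) y
    obtain ⟨d, hd⟩ := exists_forall_mem_ne_of_card_lt c hlt
    obtain ⟨r, rfl⟩ := residue_surjective d
    refine ⟨y + r • x, N.add_mem hyN (N.smul_mem r hxN), Finset.forall_mem_insert .. |>.2 ⟨?_, ?_⟩⟩
    · exact fun h ↦ hyk (((K k).add_mem_iff_left ((K k).smul_mem r hxk)).1 h)
    · exact fun i hi h ↦ hd i hi (hc i hi r h).symm

end Avoidance

lemma eq_span_singleton_of_notMem_jacobson_smul {R : Type*} [CommRing R] [IsLocalRing R]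
    {I : Ideal R} (hI : I.IsPrincipal) {x : R} (hx : x ∈ I)
    (hx' : x ∉ (⊥ : Ideal R).jacobson • I) : I = Ideal.span {x} := by
  obtain ⟨γ, rfl⟩ : ∃ γ, I = Ideal.span {γ} := hI.principal
  obtain ⟨t, rfl⟩ := Ideal.mem_span_singleton'.1 hx
  have ht : IsUnit t := by
    by_contra hnonunit
    refine hx' (Submodule.smul_mem_smul ?_ (Ideal.mem_span_singleton_self γ))
    rwa [jacobson_eq_maximalIdeal _ bot_ne_top]
  rw [Ideal.span_singleton_mul_left_unit ht]

section Index

open nonZeroDivisors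

lemma toAddSubgroup_span_singleton {R : Type*} [CommRing R] (b : R) :
    (Ideal.span {b}).toAddSubgroup = (AddMonoidHom.mulLeft b).range := by
  ext y
  simp [Ideal.mem_span_singleton, dvd_def, eq_comm]

lemma card_quotient_span_singleton_map {R P : Type*} [CommRing R] [CommRing P] {f : R →+* P}
    (hf : Function.Injective f) (hindex : (f : R →+ P).range.FiniteIndex) {b : R}
    (hb : f b ∈ P⁰) :
    Nat.card (P ⧸ Ideal.span {f b}) = Nat.card (R ⧸ Ideal.span {b}) := by
  have hmul : Function.Injective (AddMonoidHom.mulLeft (f b)) :=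
    fun _ _ h ↦ (mul_cancel_left_mem_nonZeroDivisors hb).1 h
  have hrange : (f : R →+ P).range.map (AddMonoidHom.mulLeft (f b)) =
      (AddMonoidHom.mulLeft b).range.map (f : R →+ P) := by
    rw [AddMonoidHom.map_range, AddMonoidHom.map_range]
    congr 1
    ext x
    exact (map_mul f b x).symm
  change (Ideal.span {f b}).toAddSubgroup.index = (Ideal.span {b}).toAddSubgroup.index
  rw [toAddSubgroup_span_singleton, toAddSubgroup_span_singleton]
  refine Nat.eq_of_mul_eq_mul_left (Nat.pos_of_ne_zero hindex.index_ne_zero) ?_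
  rw [← AddSubgroup.index_map_of_injective _ hmul, hrange,
    AddSubgroup.index_map_of_injective _ hf, mul_comm]

lemma card_pi_quotient_span_singleton {ι : Type*} {S : ι → Type*} [∀ i, CommRing (S i)]
    (b : ∀ i, S i) :
    Nat.card (∀ i, S i ⧸ Ideal.span {b i}) = Nat.card ((∀ i, S i) ⧸ Ideal.span {b}) := by
  let q : (∀ i, S i) →+* ∀ i, S i ⧸ Ideal.span {b i} :=
    RingHom.pi fun i ↦ (Ideal.Quotient.mk _).comp (Pi.evalRingHom S i)
  have hq : Function.Surjective q := .piMap fun i ↦ Ideal.Quotient.mk_surjective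
  have hker : RingHom.ker q = Ideal.span {b} := by
    ext x
    simp [q, RingHom.mem_ker, funext_iff, Ideal.Quotient.eq_zero_iff_mem,
      Ideal.mem_span_singleton, pi_dvd_iff]
  rw [← hker]
  exact Nat.card_congr (RingHom.quotientKerEquivOfSurjective hq).symm

lemma card_quotient_lt_of_lt {R : Type*} [CommRing R] {I J : Ideal R} (hlt : I < J)
    [Finite (R ⧸ I)] :
    Nat.card (R ⧸ J) < Nat.card (R ⧸ I) := by
  have : I.toAddSubgroup.FiniteIndex :=
    @AddSubgroup.finiteIndex_of_finite_quotient _ _ _ ‹Finite (R ⧸ I)›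
  exact AddSubgroup.index_strictAnti (Submodule.toAddSubgroup_strictMono hlt)

end Index

section SubdirectProduct

open nonZeroDivisors

variable {ι T : Type*} {S : ι → Type*} [CommRing T] [∀ i, CommRing (S i)]

lemma exists_mem_forall_map_eq_span_singleton [Finite ι] [IsLocalRing T] (f : ∀ i, T →+* S i)
    (hsurj : ∀ i, Function.Surjective (f i)) (J : Ideal T)
    (hcard : ENat.card ι ≤ ENat.card (ResidueField T))
    (hprin : ∀ i, (J.map (f i)).IsPrincipal) :
    ∃ β ∈ J, ∀ i, J.map (f i) = Ideal.span {f i β} := by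
  classical
  have := Fintype.ofFinite ι
  -- The Jacobson radical stands in for the maximal ideal, which a zero ring `S i` does not have.
  let K (i : ι) : Ideal T := ((⊥ : Ideal (S i)).jacobson • J.map (f i)).comap (f i)
  have hK (i : ι) (hne : J.map (f i) ≠ ⊥) : ¬ J ≤ K i := fun hle ↦
    hne (Submodule.eq_bot_of_le_smul_of_le_jacobson_bot _ _ (hprin i).fg
      (Ideal.map_le_iff_le_comap.2 hle) le_rfl)
  have hcard' : (Finset.card {i | J.map (f i) ≠ ⊥} : ℕ∞) ≤ ENat.card (ResidueField T) := by
    rw [ENat.card_eq_coe_fintype_card] at hcard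
    exact le_trans (mod_cast Finset.card_le_univ _) hcard
  obtain ⟨β, hβJ, hβ⟩ := exists_mem_forall_notMem J K _ hcard' (by simpa using hK)
  refine ⟨β, hβJ, fun i ↦ ?_⟩
  have hmem : f i β ∈ J.map (f i) := Ideal.mem_map_of_mem _ hβJ
  by_cases hbot : J.map (f i) = ⊥
  · rw [hbot] at hmem ⊢
    exact (Ideal.span_singleton_eq_bot.2 hmem).symm
  · have : Nontrivial (S i) := (Submodule.nontrivial_iff (S i)).1 ⟨_, _, hbot⟩
    have : IsLocalRing (S i) := .of_surjective' (f i) (hsurj i)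
    exact eq_span_singleton_of_notMem_jacobson_smul (hprin i) hmem (hβ i (by simpa using hbot))

lemma card_pi_quotient_map_eq {f : ∀ i, T →+* S i} (hinj : Function.Injective (RingHom.pi f))
    (hindex : (RingHom.pi f : T →+ ∀ i, S i).range.FiniteIndex) {J : Ideal T}
    (hreg : ∃ x ∈ J, RingHom.pi f x ∈ (∀ i, S i)⁰) {β : T}
    (hβ : ∀ i, J.map (f i) = Ideal.span {f i β}) :
    Nat.card (∀ i, S i ⧸ J.map (f i)) = Nat.card (T ⧸ Ideal.span {β}) := by
  have hβreg : RingHom.pi f β ∈ (∀ i, S i)⁰ := by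
    obtain ⟨x, hxJ, hx⟩ := hreg
    have hdvd : RingHom.pi f β ∣ RingHom.pi f x := pi_dvd_iff.2 fun i ↦
      Ideal.mem_span_singleton.1 (hβ i ▸ Ideal.mem_map_of_mem (f i) hxJ)
    obtain ⟨a, ha⟩ := hdvd
    exact (mul_mem_nonZeroDivisors.1 (ha ▸ hx)).1
  calc Nat.card (∀ i, S i ⧸ J.map (f i))
      = Nat.card (∀ i, S i ⧸ Ideal.span {f i β}) :=
        Nat.card_congr (.piCongrRight fun i ↦ (Ideal.quotEquivOfEq (hβ i)).toEquiv)
    _ = Nat.card ((∀ i, S i) ⧸ Ideal.span {RingHom.pi f β}) :=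
        card_pi_quotient_span_singleton (RingHom.pi f β)
    _ = Nat.card (T ⧸ Ideal.span {β}) := card_quotient_span_singleton_map hinj hindex hβreg

lemma finite_pi_quotient_map [Finite ι] {f : ∀ i, T →+* S i}
    (hsurj : ∀ i, Function.Surjective (f i)) (J : Ideal T) [Finite (T ⧸ J)] :
    Finite (∀ i, S i ⧸ J.map (f i)) := by
  have (i : ι) : Finite (S i ⧸ J.map (f i)) :=
    .of_surjective (Ideal.quotientMap _ (f i) Ideal.le_comap_map)
      (Ideal.quotientMap_surjective (hsurj i))
  infer_instance

theorem statement_general [Finite ι] [IsLocalRing T] (f : ∀ i, T →+* S i)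
    (hsurj : ∀ i, Function.Surjective (f i)) (hinj : Function.Injective (RingHom.pi f))
    (hindex : (RingHom.pi f : T →+ ∀ i, S i).range.FiniteIndex)
    (J : Ideal T) [Finite (T ⧸ J)]
    (hcard : ENat.card ι ≤ ENat.card (ResidueField T))
    (hreg : ∃ x ∈ J, RingHom.pi f x ∈ (∀ i, S i)⁰)
    (hprin : ∀ i, (J.map (f i)).IsPrincipal) :
    Nat.card (T ⧸ J) ≤ Nat.card (∀ i, S i ⧸ J.map (f i)) ∧
      (Nat.card (∀ i, S i ⧸ J.map (f i)) = Nat.card (T ⧸ J) ↔ J.IsPrincipal) := by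
  obtain ⟨β, hβJ, hβ⟩ := exists_mem_forall_map_eq_span_singleton f hsurj J hcard hprin
  have hβcard := card_pi_quotient_map_eq hinj hindex hreg hβ
  have : Finite (T ⧸ Ideal.span {β}) := by
    have := finite_pi_quotient_map hsurj J
    exact Nat.finite_of_card_ne_zero (hβcard ▸ Nat.card_pos.ne')
  have hle : Ideal.span {β} ≤ J := (Ideal.span_singleton_le_iff_mem J).2 hβJ
  rw [hβcard]
  refine ⟨hle.eq_or_lt.elim (fun h ↦ by rw [h]) fun h ↦ (card_quotient_lt_of_lt h).le,
    fun h ↦ ⟨β, (hle.eq_of_not_lt fun hlt ↦ (card_quotient_lt_of_lt hlt).ne' h).symm⟩, ?_⟩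
  rintro ⟨γ, rfl : J = Ideal.span {γ}⟩
  exact hβcard.symm.trans (card_pi_quotient_map_eq hinj hindex hreg fun i ↦ by
    rw [Ideal.map_span, Set.image_singleton])

end SubdirectProduct

section Coordinates

open nonZeroDivisors

lemma infinite_of_isDiscreteValuationRing (R : Type*) [CommRing R] [IsDomain R]
    [IsDiscreteValuationRing R] : Infinite R := by
  by_contra h
  rw [not_infinite_iff_finite] at h
  exact IsDiscreteValuationRing.not_isField R (Finite.isField_of_domain R)

lemma exists_ne_zero_algebraMap_mem (R : Type*) {B : Type*} [CommRing R] [Infinite R] [CommRing B]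
    [Algebra R B] (J : Ideal B) [Finite (B ⧸ J)] : ∃ r : R, r ≠ 0 ∧ algebraMap R B r ∈ J := by
  by_contra! h
  refine not_injective_infinite_finite (algebraMap R (B ⧸ J))
    ((injective_iff_map_eq_zero _).2 fun r hr ↦ ?_)
  by_contra hne
  exact h r hne (Ideal.Quotient.eq_zero_iff_mem.1 hr)

lemma residueField_map_bijective {R S : Type*} [CommRing R] [CommRing S] [IsLocalRing R]
    [IsLocalRing S] (f : R →+* S) [IsLocalHom f] (hf : Function.Surjective f) :
    Function.Bijective (ResidueField.map f) := by
  refine ⟨(ResidueField.map f).injective, fun c ↦ ?_⟩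
  obtain ⟨y, rfl⟩ := residue_surjective c
  obtain ⟨x, rfl⟩ := hf y
  exact ⟨residue R x, ResidueField.map_residue f x⟩

variable {R : Type} [CommRing R] {s : ℕ} {n : Fin s → ℕ} (T : Subalgebra R (A R s n))

/-- The map `T → ∏ T_i` with components `φ_i`, which makes `T` a subdirect product of the `T_i`. -/
abbrev piψ : T →+* ∀ i, Ti R s n T i := RingHom.pi fun i ↦ ψ R s n T i

lemma ψ_surjective (i : Fin s) : Function.Surjective (ψ R s n T i) := by
  rintro ⟨_, x, hx, rfl⟩
  exact ⟨⟨x, hx⟩, rfl⟩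

lemma piψ_injective : Function.Injective (piψ T) :=
  fun _ _ h ↦ Subtype.ext (funext fun i ↦ congrArg Subtype.val (congrFun h i))

lemma finiteIndex_range_piψ [Finite (A R s n ⧸ T.toSubmodule)] :
    (piψ T : T →+ ∀ i, Ti R s n T i).range.FiniteIndex := by
  have : T.toSubmodule.toAddSubgroup.FiniteIndex :=
    @AddSubgroup.finiteIndex_of_finite_quotient _ _ _ ‹Finite (A R s n ⧸ T.toSubmodule)›
  let incl : (∀ i, Ti R s n T i) →+ A R s n :=
    (RingHom.pi fun i ↦ (Ti R s n T i).subtype.comp (Pi.evalRingHom _ i) : _ →+* A R s n)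
  have hrange : (piψ T : T →+ ∀ i, Ti R s n T i).range =
      T.toSubmodule.toAddSubgroup.comap incl := by
    ext y
    exact ⟨by rintro ⟨x, rfl⟩; exact x.2, fun hy ↦ ⟨⟨incl y, hy⟩, rfl⟩⟩
  have := AddSubgroup.isFiniteRelIndex_of_finiteIndex (H := T.toSubmodule.toAddSubgroup)
    (K := incl.range)
  exact ⟨by rw [hrange, AddSubgroup.index_comap]; exact AddSubgroup.relIndex_ne_zero⟩

lemma exists_mem_piψ_mem_nonZeroDivisors [IsDomain R] [Infinite R] (J : Ideal T)
    [Finite (T ⧸ J)] :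
    ∃ x ∈ J, piψ T x ∈ (∀ i, Ti R s n T i)⁰ := by
  obtain ⟨r, hr, hrJ⟩ := exists_ne_zero_algebraMap_mem R J
  refine ⟨_, hrJ, mem_nonZeroDivisors_iff_right.2 fun y hy ↦ ?_⟩
  ext i k
  have hcoord : (y i : Fin (n i) → R) k * r = 0 :=
    congrFun (congrArg Subtype.val (congrFun hy i)) k
  exact (mul_eq_zero.1 hcoord).resolve_right hr

lemma card_residueField_eq [IsLocalRing R] [IsLocalRing T] :
    ENat.card (ResidueField T) = ENat.card (ResidueField R) := by
  obtain ⟨i, ⟨k⟩⟩ : ∃ i, Nonempty (Fin (n i)) := by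
    by_contra! h
    exact not_subsingleton T inferInstance
  let coord : T →+* R := ((Pi.evalRingHom (fun _ ↦ R) k).comp
    (Pi.evalRingHom (fun i ↦ Fin (n i) → R) i)).comp T.subtype
  have hcoord : Function.Surjective coord := fun r ↦ ⟨algebraMap R T r, rfl⟩
  have := IsLocalHom.of_surjective coord hcoord
  exact ENat.card_congr (.ofBijective _ (residueField_map_bijective coord hcoord))

end Coordinates

/-- (Berger–Klosin–Kramer.)  If the residue field of `O` has at least `s` elements and each
`J_i ⊆ T_i` is principal, then `#(∏ T_i/J_i) ≥ #(T/J)`, with equality iff `J` is principal. -/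
theorem statement
    -- `O` is the valuation ring of a finite extension of `ℚ_p`:
    [IsAdicComplete (maximalIdeal O) O] [Finite (ResidueField O)]
    [CharP (ResidueField O) p]
    (hs : 0 < s) (hn : ∀ i, 0 < n i)
    -- `T` is a local complete `O`-subalgebra of full rank in `A`:
    [IsLocalRing T] [IsAdicComplete (maximalIdeal T) T]
    (hfullrank : Finite ((A O s n) ⧸ T.toSubmodule))
    -- `J ⊆ T` is an ideal of finite index:
    (J : Ideal T) (hJ : Finite (T ⧸ J))
    -- the residue field of `O` has at least `s` elements:
    (hres : s ≤ Nat.card (ResidueField O))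
    -- each `J_i` is principal:
    (hprin : ∀ i, (Ji O s n T J i).IsPrincipal) :
    Nat.card (T ⧸ J) ≤ Nat.card (∀ i, Ti O s n T i ⧸ Ji O s n T J i) ∧
      (Nat.card (∀ i, Ti O s n T i ⧸ Ji O s n T J i) = Nat.card (T ⧸ J) ↔
        J.IsPrincipal) := by
  have := infinite_of_isDiscreteValuationRing O
  exact statement_general (fun i ↦ (ψ O s n T i : T →+* Ti O s n T i)) (ψ_surjective T)
    (piψ_injective T) (finiteIndex_range_piψ T) J
    (by simpa [card_residueField_eq T, ENat.card_eq_coe_natCard] using hres)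
    (exists_mem_piψ_mem_nonZeroDivisors T J) hprin

end Stmt0
end
end

section
/- (Equality part of Lemma 2.6.) Assume that the residue field F_ϖ of O has at least s elements (equivalently #F_ϖ^× ≥ s−1) and that each ideal J_i ⊆ T_i is principal. Then the ideal of ∏_{i=1}^s T_i generated by J equals the product ideal: J · ∏_{i=1}^s T_i = ∏_{i=1}^s J_i. (In particular there exists α ∈ J such that φ_i(α) generates J_i for every i.) -/
/-!
Setting: `O` is the valuation ring of a finite extension of `ℚ_p`, abstracted as a complete
discrete valuation ring with finite residue field of characteristic `p`.
`A = ∏ i, O^(n i)`, `T ⊆ A` a local complete `O`-subalgebra of full rank (`A/T` finite),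
`J ⊆ T` an ideal of finite index, `T_i = φ_i(T)`, `J_i = φ_i(J)`.
-/

open IsLocalRing

set_option synthInstance.maxHeartbeats 1000000
set_option maxHeartbeats 1000000

noncomputable section

namespace Stmt2

variable (p : ℕ) [Fact (Nat.Prime p)]
variable (O : Type) [CommRing O] [IsDomain O] [IsDiscreteValuationRing O]
variable (s : ℕ) (n : Fin s → ℕ)

/-- The ambient algebra `A = ∏_{i=1}^s O^{n_i}`. -/
abbrev A : Type := ∀ i : Fin s, Fin (n i) → O

/-- The canonical projection `φ_i : A → A_i = O^{n_i}`. -/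
def φ (i : Fin s) : A O s n →ₐ[O] (Fin (n i) → O) :=
  Pi.evalAlgHom O (fun i => Fin (n i) → O) i

variable (T : Subalgebra O (A O s n))

/-- `T_i = φ_i(T)`. -/
def Ti (i : Fin s) : Subalgebra O (Fin (n i) → O) := T.map (φ O s n i)

/-- The projection `T → T_i` induced by `φ_i`. -/
def ψ (i : Fin s) : T →ₐ[O] Ti O s n T i :=
  AlgHom.codRestrict ((φ O s n i).comp T.val) (Ti O s n T i)
    (fun x => ⟨x.1, x.2, rfl⟩)

/-- `J_i = φ_i(J)`, as an ideal of `T_i`. -/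
def Ji (J : Ideal T) (i : Fin s) : Ideal (Ti O s n T i) :=
  J.map (ψ O s n T i)

/-- The natural inclusion `T → ∏_{i=1}^s T_i`. -/
def Ψ : T →ₐ[O] ∀ i, Ti O s n T i :=
  Pi.algHom O _ (fun i => ψ O s n T i)

/-- The ideal `∏_{i=1}^s J_i` of the product ring `∏_{i=1}^s T_i`, consisting of the tuples
whose `i`-th entry lies in `J_i`. -/
def prodIdeal (J : Ideal T) : Ideal (∀ i, Ti O s n T i) where
  carrier := {x | ∀ i, x i ∈ Ji O s n T J i}
  add_mem' hx hy i := (Ji O s n T _ i).add_mem (hx i) (hy i)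
  zero_mem' i := (Ji O s n T _ i).zero_mem
  smul_mem' c x hx i := (Ji O s n T _ i).smul_mem (c i) (hx i)

/-!
An element `x` of a principal ideal `I` of a local ring `B` generates `I` unless `x ∈ 𝔪_B I`, and by
Nakayama `𝔪_B I ≠ I` unless `I = 0`. So every `α ∈ J` generates `J_i` when `J_i = 0`, and for the
other `i` it suffices that `α` avoids the `O`-submodule `φ_i⁻¹(𝔪_i J_i)`, which does not contain
`J`. Finding `α` thus amounts to avoiding at most `s` proper submodules of `J`. This is possible
because a projective line over the residue field `k` has `#k + 1 > s` points.
-/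

section Avoidance

variable {R M ι : Type*} [CommRing R] [IsLocalRing R] [AddCommGroup M] [Module R M]

theorem residue_eq_of_add_smul_mem {N : Submodule R M} {a b : M} (hab : a ∉ N ∨ b ∉ N) {r r' : R}
    (hr : a + r • b ∈ N) (hr' : a + r' • b ∈ N) : residue R r = residue R r' := by
  by_contra hne
  have hunit : IsUnit (r - r') := by
    rwa [← residue_ne_zero_iff_isUnit, map_sub, sub_ne_zero]
  have hb : b ∈ N := by
    rw [← N.smul_mem_iff_of_isUnit hunit]
    simpa [sub_smul] using N.sub_mem hr hr'
  exact hab.elim (· ((N.add_mem_iff_left (N.smul_mem r hb)).mp hr)) (· hb)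

theorem exists_forall_add_smul_notMem {N : ι → Submodule R M} {t : Finset ι} {a b : M}
    (ht : t.card < ENat.card (ResidueField R)) (hab : ∀ i ∈ t, a ∉ N i ∨ b ∉ N i) :
    ∃ r : R, ∀ i ∈ t, a + r • b ∉ N i := by
  by_contra! hmem
  choose i hit hi using hmem
  let rep : ResidueField R → R := Function.surjInv residue_surjective
  have hinj : Function.Injective fun c ↦ (⟨i (rep c), hit _⟩ : t) := by
    intro c d hcd
    have hi_eq : i (rep c) = i (rep d) := congrArg Subtype.val hcd
    have hd : a + rep d • b ∈ N (i (rep c)) := hi_eq ▸ hi (rep d)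
    simpa [rep, Function.surjInv_eq] using
      residue_eq_of_add_smul_mem (hab _ (hit _)) (hi (rep c)) hd
  exact ht.not_ge (by simpa using ENat.card_le_card_of_injective hinj)

theorem exists_mem_forall_notMem_of_forall_not_le {P : Submodule R M} {N : ι → Submodule R M}
    {t : Finset ι} (ht : t.card ≤ ENat.card (ResidueField R)) (hN : ∀ i ∈ t, ¬ P ≤ N i) :
    ∃ x ∈ P, ∀ i ∈ t, x ∉ N i := by
  classical
  induction t using Finset.induction_on with
  | empty => exact ⟨0, P.zero_mem, by simp⟩
  | insert i t _ ih =>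
    obtain ⟨a, haP, ha⟩ := ih (le_trans (mod_cast Finset.card_le_card (t.subset_insert i)) ht)
      fun j hj ↦ hN j (Finset.mem_insert_of_mem hj)
    obtain ⟨b, hbP, hb⟩ := SetLike.not_le_iff_exists.mp (hN i (t.mem_insert_self i))
    have hab : ∀ j ∈ insert i t, a ∉ N j ∨ b ∉ N j :=
      Finset.forall_mem_insert .. |>.mpr ⟨.inr hb, fun j hj ↦ .inl (ha j hj)⟩
    by_cases hbN : ∀ j ∈ insert i t, b ∉ N j
    · exact ⟨b, hbP, hbN⟩
    push Not at hbN
    obtain ⟨j, hj, hbj⟩ := hbN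
    have haj : a ∉ N j := (hab j hj).resolve_right (not_not_intro hbj)
    -- The whole line `a + R b` misses `N j`, so only the other submodules have to be avoided.
    obtain ⟨r, hr⟩ := exists_forall_add_smul_notMem (a := a) (b := b) (N := N)
      (lt_of_lt_of_le (mod_cast Finset.card_erase_lt_of_mem hj) ht)
      fun l hl ↦ hab l (Finset.mem_of_mem_erase hl)
    refine ⟨a + r • b, P.add_mem haP (P.smul_mem r hbP), fun l hl ↦ ?_⟩
    rcases eq_or_ne l j with rfl | hlj
    · rwa [(N l).add_mem_iff_left ((N l).smul_mem r hbj)]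
    · exact hr l (Finset.mem_erase.mpr ⟨hlj, hl⟩)

end Avoidance

section PrincipalIdeal

variable {B : Type*} [CommRing B] [IsLocalRing B] {I : Ideal B}

theorem eq_span_singleton_of_notMem_maximalIdeal_mul (hI : I.IsPrincipal) {x : B} (hx : x ∈ I)
    (hx' : x ∉ maximalIdeal B * I) : I = Ideal.span {x} := by
  obtain ⟨g, rfl : I = Ideal.span {g}⟩ := hI
  obtain ⟨c, rfl⟩ := Ideal.mem_span_singleton'.mp hx
  have hc : IsUnit c := by
    by_contra hc
    exact hx' (Ideal.mul_mem_mul hc (Ideal.mem_span_singleton_self g))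
  exact (Ideal.span_singleton_mul_left_unit hc g).symm

theorem eq_bot_of_le_maximalIdeal_mul (hI : I.FG) (hle : I ≤ maximalIdeal B * I) : I = ⊥ :=
  Submodule.eq_bot_of_le_smul_of_le_jacobson_bot _ I hI hle (maximalIdeal_le_jacobson ⊥)

end PrincipalIdeal

section Generator

variable {ι S : Type*} [CommRing S] {B : ι → Type*} [∀ i, CommRing (B i)] {J : Ideal S}

theorem map_pi_eq_pi_of_map_eq_span_singleton {f : ∀ i, S →+* B i} {α : S} (hα : α ∈ J)
    (hgen : ∀ i, J.map (f i) = Ideal.span {f i α}) :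
    J.map (RingHom.pi f) = Ideal.pi fun i ↦ J.map (f i) := by
  apply le_antisymm
  · exact Ideal.map_le_iff_le_comap.mpr fun x hx i ↦ Ideal.mem_map_of_mem (f i) hx
  · intro x hx
    have hdvd : ∀ i, ∃ y, y * f i α = x i := fun i ↦
      Ideal.mem_span_singleton'.mp (hgen i ▸ hx i)
    choose y hy using hdvd
    have hxy : y * RingHom.pi f α = x := funext hy
    exact hxy ▸ Ideal.mul_mem_left _ y (Ideal.mem_map_of_mem _ hα)

variable {R : Type*} [CommRing R] [IsLocalRing R] [Algebra R S] [∀ i, Algebra R (B i)]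
  [∀ i, IsLocalRing (B i)] [Finite ι]

theorem exists_mem_forall_map_eq_span_singleton (f : ∀ i, S →ₐ[R] B i)
    (hcard : ENat.card ι ≤ ENat.card (ResidueField R)) (hprin : ∀ i, (J.map (f i)).IsPrincipal) :
    ∃ α ∈ J, ∀ i, J.map (f i) = Ideal.span {f i α} := by
  classical
  have := Fintype.ofFinite ι
  let N (i : ι) : Submodule R S :=
    ((maximalIdeal (B i) * J.map (f i)).comap (f i)).restrictScalars R
  let t : Finset ι := {i | J.map (f i) ≠ ⊥}
  have ht : t.card ≤ ENat.card (ResidueField R) :=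
    le_trans (by simpa using t.card_le_univ) hcard
  have hN : ∀ i ∈ t, ¬ J.restrictScalars R ≤ N i := fun i hi hle ↦
    (Finset.mem_filter.mp hi).2 <|
      eq_bot_of_le_maximalIdeal_mul (hprin i).fg (Ideal.map_le_iff_le_comap.mpr hle)
  obtain ⟨α, hα, hαN⟩ := exists_mem_forall_notMem_of_forall_not_le ht hN
  refine ⟨α, hα, fun i ↦ ?_⟩
  have hfα : f i α ∈ J.map (f i) := Ideal.mem_map_of_mem (f i) hα
  by_cases hbot : J.map (f i) = ⊥
  · rw [hbot, Ideal.mem_bot] at hfα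
    rw [hbot, hfα, Ideal.span_singleton_zero]
  · exact eq_span_singleton_of_notMem_maximalIdeal_mul (hprin i) hfα
      (hαN i (Finset.mem_filter.mpr ⟨Finset.mem_univ i, hbot⟩))

theorem statement_general (f : ∀ i, S →ₐ[R] B i)
    (hcard : ENat.card ι ≤ ENat.card (ResidueField R)) (hprin : ∀ i, (J.map (f i)).IsPrincipal) :
    J.map (AlgHom.pi f) = Ideal.pi (fun i ↦ J.map (f i)) ∧
      ∃ α ∈ J, ∀ i, J.map (f i) = Ideal.span {f i α} := by
  obtain ⟨α, hα, hgen⟩ := exists_mem_forall_map_eq_span_singleton f hcard hprin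
  exact ⟨map_pi_eq_pi_of_map_eq_span_singleton (f := fun i ↦ (f i : S →+* B i)) hα hgen,
    α, hα, hgen⟩

end Generator

section Projection

variable {R : Type} [CommRing R] {m : ℕ} {d : Fin m → ℕ} (U : Subalgebra R (A R m d))

theorem ψ_surjective (i : Fin m) : Function.Surjective (ψ R m d U i) := by
  rintro ⟨_, x, hx, rfl⟩
  exact ⟨⟨x, hx⟩, rfl⟩

theorem isLocalRing_Ti [IsLocalRing U] {i : Fin m} (hi : 0 < d i) : IsLocalRing (Ti R m d U i) :=
  have : Nontrivial R := Module.nontrivial R U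
  have : Nonempty (Fin (d i)) := ⟨0, hi⟩
  .of_surjective' (ψ R m d U i).toRingHom (ψ_surjective U i)

end Projection

/-- (Equality part of Lemma 2.6.)  If the residue field of `O` has at least `s` elements and
each `J_i ⊆ T_i` is principal, then the ideal of `∏_{i=1}^s T_i` generated by `J` equals the
product ideal `∏_{i=1}^s J_i`; in particular there is an `α ∈ J` such that `φ_i(α)` generates
`J_i` for every `i`. -/
theorem statement
    -- `O` is the valuation ring of a finite extension of `ℚ_p`:
    [IsAdicComplete (maximalIdeal O) O] [Finite (ResidueField O)]
    [CharP (ResidueField O) p]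
    (hs : 0 < s) (hn : ∀ i, 0 < n i)
    -- `T` is a local complete `O`-subalgebra of full rank in `A`:
    [IsLocalRing T] [IsAdicComplete (maximalIdeal T) T]
    (hfullrank : Finite ((A O s n) ⧸ T.toSubmodule))
    -- `J ⊆ T` is an ideal of finite index:
    (J : Ideal T) (hJ : Finite (T ⧸ J))
    -- the residue field of `O` has at least `s` elements:
    (hres : s ≤ Nat.card (ResidueField O))
    -- each `J_i` is principal:
    (hprin : ∀ i, (Ji O s n T J i).IsPrincipal) :
    Ideal.map (Ψ O s n T) J = prodIdeal O s n T J ∧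
      ∃ α : T, α ∈ J ∧ ∀ i, Ji O s n T J i = Ideal.span {ψ O s n T i α} := by
  have := fun i ↦ isLocalRing_Ti T (hn i)
  exact statement_general (ψ O s n T) (by simpa [ENat.card_eq_coe_natCard] using hres) hprin

end Stmt2
end
end

section
/- (Proposition 2.3.) Assume that the residue field F_ϖ of O has at least s elements (equivalently #F_ϖ^× ≥ s−1) and that each ideal J_i ⊆ T_i is principal. Then the Hilbert–Samuel multiplicities satisfy e(J,T) = ∑_{i=1}^s e(J_i,T_i). Concretely: for all sufficiently large natural numbers r, the length of J^r/J^{r+1} as a T-module equals the sum over i = 1,…,s of the lengths of J_i^r/J_i^{r+1} as T_i-modules. -/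
/-!
Setting: `O` is the valuation ring of a finite extension of `ℚ_p`, abstracted as a complete
discrete valuation ring with finite residue field of characteristic `p`.
`A = ∏ i, O^(n i)`, `T ⊆ A` a local complete `O`-subalgebra of full rank (`A/T` finite),
`J ⊆ T` an ideal of finite index, `T_i = φ_i(T)`, `J_i = φ_i(J)`.
-/

open IsLocalRing

set_option synthInstance.maxHeartbeats 1000000
set_option maxHeartbeats 1000000

noncomputable section

namespace Stmt3

variable (p : ℕ) [Fact (Nat.Prime p)]
variable (O : Type) [CommRing O] [IsDomain O] [IsDiscreteValuationRing O]
variable (s : ℕ) (n : Fin s → ℕ)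

/-- The ambient algebra `A = ∏_{i=1}^s O^{n_i}`. -/
abbrev A : Type := ∀ i : Fin s, Fin (n i) → O

/-- The canonical projection `φ_i : A → A_i = O^{n_i}`. -/
def φ (i : Fin s) : A O s n →ₐ[O] (Fin (n i) → O) :=
  Pi.evalAlgHom O (fun i => Fin (n i) → O) i

variable (T : Subalgebra O (A O s n))

/-- `T_i = φ_i(T)`. -/
def Ti (i : Fin s) : Subalgebra O (Fin (n i) → O) := T.map (φ O s n i)

/-- The projection `T → T_i` induced by `φ_i`. -/
def ψ (i : Fin s) : T →ₐ[O] Ti O s n T i :=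
  AlgHom.codRestrict ((φ O s n i).comp T.val) (Ti O s n T i)
    (fun x => ⟨x.1, x.2, rfl⟩)

/-- `J_i = φ_i(J)`, as an ideal of `T_i`. -/
def Ji (J : Ideal T) (i : Fin s) : Ideal (Ti O s n T i) :=
  J.map (ψ O s n T i)

/-- The natural inclusion `T → ∏_{i=1}^s T_i`. -/
def Ψ : T →ₐ[O] ∀ i, Ti O s n T i :=
  Pi.algHom O _ (fun i => ψ O s n T i)

/-- The ideal `∏_{i=1}^s J_i` of the product ring `∏_{i=1}^s T_i`, consisting of the tuples
whose `i`-th entry lies in `J_i`. -/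
def prodIdeal (J : Ideal T) : Ideal (∀ i, Ti O s n T i) where
  carrier := {x | ∀ i, x i ∈ Ji O s n T J i}
  add_mem' hx hy i := (Ji O s n T _ i).add_mem (hx i) (hy i)
  zero_mem' i := (Ji O s n T _ i).zero_mem
  smul_mem' c x hx i := (Ji O s n T _ i).smul_mem (c i) (hx i)

/-- The length of a module: the Krull dimension of its lattice of submodules. -/
def moduleLength (R M : Type*) [Semiring R] [AddCommMonoid M] [Module R M] : WithBot ℕ∞ :=
  Order.krullDim (Submodule R M)

/-- The Hilbert–Samuel function `r ↦ length_T (J^r / J^(r+1))` of an ideal `J` of a ring `T`. -/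
def hilbertSamuel {T : Type*} [CommRing T] (J : Ideal T) (r : ℕ) : WithBot ℕ∞ :=
  moduleLength T (↥(J ^ r) ⧸ Submodule.comap (J ^ r).subtype (J ^ (r + 1)))

/-!
By Nakayama, an element of `J` generates `J_i` as soon as its image avoids `𝔪_i J_i`. This excludes
one proper submodule of `J` for each `i`, and there are at most as many of them as elements of the
residue field, so a single `x ∈ J` generates every `J_i`; that is, `x S = J S` for `S = ∏ i, T_i`.
The submodules `x⁻ʳ Jʳ` of `S` then form an increasing chain between `T` and `S`. As `S / T` has
finite length, the chain stabilises at some `N`, and `Jʳ / Jʳ⁺¹ ≅ N / x N` has the same length as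
`S / x S = ∏ i, T_i / x T_i`. The same computation with `T_i` for both `T` and `S` identifies the
length of `J_iʳ / J_iʳ⁺¹` with that of `T_i / x T_i`.
-/

section RelLength

open scoped Pointwise

variable {R M M' : Type*} [CommRing R] [AddCommGroup M] [Module R M] [AddCommGroup M'] [Module R M']

/-- The length of `Q / (P ∩ Q)` for submodules `P`, `Q` of a common module, i.e. of `Q / P` when
`P ≤ Q`; the analogue for lengths of `AddSubgroup.relIndex`. -/
def relLength (P Q : Submodule R M) : ℕ∞ :=
  Module.length R (Q ⧸ P.submoduleOf Q)

lemma relLength_top_right (P : Submodule R M) : relLength P ⊤ = Module.length R (M ⧸ P) :=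
  (Submodule.Quotient.equiv _ _ Submodule.topEquiv <|
    Submodule.map_comap_eq_of_surjective Submodule.topEquiv.surjective P).length_eq

lemma relLength_add_relLength {P Q L : Submodule R M} (hPQ : P ≤ Q) (hQL : Q ≤ L) :
    relLength P Q + relLength Q L = relLength P L := by
  let incl : (Q ⧸ P.submoduleOf Q) →ₗ[R] L ⧸ P.submoduleOf L :=
    Submodule.mapQ _ _ (Submodule.inclusion hQL) le_rfl
  let proj : (L ⧸ P.submoduleOf L) →ₗ[R] L ⧸ Q.submoduleOf L :=
    Submodule.factor (Submodule.comap_mono hPQ)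
  have ker_incl : incl.ker = ⊥ :=
    (Submodule.ker_mapQ _ _ _ _).trans (Submodule.mkQ_map_self _)
  have ker_proj : proj.ker = incl.range :=
    calc proj.ker = (Q.submoduleOf L).map (P.submoduleOf L).mkQ := Submodule.ker_mapQ _ _ _ _
      _ = (Submodule.inclusion hQL).range.map (P.submoduleOf L).mkQ := by
        rw [Submodule.range_inclusion]
        rfl
      _ = incl.range := (Submodule.range_mapQ _ _ _ _).symm
  exact (Module.length_eq_add_of_exact incl proj (LinearMap.ker_eq_bot.1 ker_incl)
    (Submodule.factor_surjective _) (LinearMap.exact_iff.2 ker_proj)).symm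

lemma relLength_map {g : M →ₗ[R] M'} (hg : Function.Injective g) (P Q : Submodule R M) :
    relLength (P.map g) (Q.map g) = relLength P Q := by
  let e := Q.equivMapOfInjective g hg
  have comap_submoduleOf :
      ((P.map g).submoduleOf (Q.map g)).comap e.toLinearMap = P.submoduleOf Q := by
    ext q
    simp [e, Submodule.submoduleOf, hg.eq_iff]
  refine (Submodule.Quotient.equiv (P.submoduleOf Q) _ e ?_).length_eq.symm
  rw [← comap_submoduleOf, Submodule.map_comap_eq_of_surjective e.surjective]

lemma relLength_smul {x : R} (hx : IsSMulRegular M x) (P Q : Submodule R M) :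
    relLength (x • P) (x • Q) = relLength P Q :=
  relLength_map (g := DistribSMul.toLinearMap R M x) hx P Q

/-- Compare the two chains `x N ≤ N ≤ L` and `x N ≤ x L ≤ L`, whose factors `L / N` and
`x L / x N` are isomorphic. -/
lemma relLength_smul_self_eq {x : R} (hx : IsSMulRegular M x) {N L : Submodule R M} (hNL : N ≤ L)
    (hfin : relLength N L ≠ ⊤) : relLength (x • N) N = relLength (x • L) L := by
  have smul_le_smul : x • N ≤ x • L := Submodule.map_mono hNL
  refine ENat.add_right_injective_of_ne_top hfin ?_
  calc relLength N L + relLength (x • N) N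
      = relLength (x • N) L := by
        rw [add_comm, relLength_add_relLength (Submodule.smul_le_self_of_tower x N) hNL]
    _ = relLength N L + relLength (x • L) L := by
        rw [← relLength_smul hx N L, relLength_add_relLength smul_le_smul
          (Submodule.smul_le_self_of_tower x L)]

end RelLength

lemma eventually_succ_eq_of_monotone_of_le {R M : Type*} [CommRing R] [AddCommGroup M] [Module R M]
    {P : Submodule R M} [IsNoetherian R (M ⧸ P)] {N : ℕ → Submodule R M} (hN : Monotone N)
    (hP : ∀ r, P ≤ N r) : ∀ᶠ r in Filter.atTop, N (r + 1) = N r := by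
  obtain ⟨r₀, stable⟩ := WellFoundedGT.monotone_chain_condition
    ⟨fun r ↦ (N r).map P.mkQ, fun _ _ h ↦ Submodule.map_mono (hN h)⟩
  have comap_map (r : ℕ) : ((N r).map P.mkQ).comap P.mkQ = N r := by
    rw [Submodule.comap_map_mkQ, sup_eq_right.2 (hP r)]
  filter_upwards [Filter.eventually_ge_atTop r₀] with r hr
  have map_succ : (N (r + 1)).map P.mkQ = (N r).map P.mkQ :=
    (stable (r + 1) (by lia)).symm.trans (stable r hr)
  rw [← comap_map, map_succ, comap_map]

section Reduction

open scoped Pointwise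

variable {R : Type*} (S : Type*) [CommRing R] [CommRing S] [Algebra R S] (J : Ideal R) (x : R)

/-- The `R`-submodule `x⁻ʳ Jʳ` of an `R`-algebra `S`: all `b : S` for which `xʳ b` is the image of
an element of `Jʳ`. When `x ∈ J` these increase with `r`, towards the blow-up algebra of `J`. -/
def divPow (r : ℕ) : Submodule R S :=
  (Submodule.map (Algebra.linearMap R S) (J ^ r)).comap (DistribSMul.toLinearMap R S (x ^ r))

variable {S J x}

lemma mem_divPow {r : ℕ} {b : S} :
    b ∈ divPow S J x r ↔ ∃ y ∈ J ^ r, algebraMap R S y = x ^ r • b :=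
  Iff.rfl

lemma divPow_mono (hx : x ∈ J) : Monotone (divPow S J x) := by
  refine monotone_nat_of_le_succ fun r b hb ↦ ?_
  obtain ⟨y, hy, hyb⟩ := mem_divPow.1 hb
  refine mem_divPow.2 ⟨x * y, pow_succ' J r ▸ Ideal.mul_mem_mul hx hy, ?_⟩
  rw [map_mul, hyb, pow_succ', mul_smul, Algebra.smul_def x]

lemma range_linearMap_le_divPow (hx : x ∈ J) (r : ℕ) :
    (Algebra.linearMap R S).range ≤ divPow S J x r := by
  rintro _ ⟨a, rfl⟩
  exact mem_divPow.2 ⟨x ^ r * a, Ideal.mul_mem_right _ _ (Ideal.pow_mem_pow hx r),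
    by simp [Algebra.smul_def]⟩

lemma pow_smul_divPow (hJ : J.map (algebraMap R S) ≤ Ideal.span {algebraMap R S x}) (r : ℕ) :
    x ^ r • divPow S J x r = Submodule.map (Algebra.linearMap R S) (J ^ r) := by
  refine (Submodule.map_comap_eq _ _).trans (inf_eq_right.2 ?_)
  rintro _ ⟨y, hy, rfl⟩
  have hmem : algebraMap R S y ∈ Ideal.span {algebraMap R S x ^ r} := by
    rw [← Ideal.span_singleton_pow]
    exact Ideal.pow_right_mono hJ r (Ideal.map_pow (algebraMap R S) J r ▸ Ideal.mem_map_of_mem _ hy)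
  obtain ⟨b, hb⟩ := Ideal.mem_span_singleton'.1 hmem
  exact ⟨b, by simp [← hb, Algebra.smul_def, mul_comm]⟩

lemma hilbertSamuel_eq_relLength (J : Ideal R) (r : ℕ) :
    hilbertSamuel J r = relLength (J ^ (r + 1)) (J ^ r) :=
  (Module.coe_length _ _).symm

/-- Once `N := x⁻ʳ Jʳ` is stationary, `Jʳ / Jʳ⁺¹ = xʳ N / xʳ⁺¹ N ≅ N / x N`, and `N` has finite
colength in `S`. -/
lemma eventually_hilbertSamuel_eq_length (hinj : Function.Injective (algebraMap R S))
    (hcoker : IsFiniteLength R (S ⧸ (Algebra.linearMap R S).range))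
    (hreg : IsSMulRegular S x) (hx : x ∈ J)
    (hJ : J.map (algebraMap R S) ≤ Ideal.span {algebraMap R S x}) :
    ∀ᶠ r in Filter.atTop,
      hilbertSamuel J r = Module.length R (S ⧸ x • (⊤ : Submodule R S)) := by
  have := (isFiniteLength_iff_isNoetherian_isArtinian.1 hcoker).1
  filter_upwards [eventually_succ_eq_of_monotone_of_le (divPow_mono (S := S) hx)
    (range_linearMap_le_divPow hx)] with r stationary
  have hfin : relLength (divPow S J x r) ⊤ ≠ ⊤ := by
    rw [relLength_top_right, Module.length_ne_top_iff]
    exact hcoker.of_surjective (Submodule.factor_surjective (range_linearMap_le_divPow hx r))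
  rw [hilbertSamuel_eq_relLength, WithBot.coe_inj]
  calc relLength (J ^ (r + 1)) (J ^ r)
      = relLength (x ^ (r + 1) • divPow S J x (r + 1)) (x ^ r • divPow S J x r) := by
        rw [pow_smul_divPow hJ, pow_smul_divPow hJ, relLength_map hinj]
    _ = relLength (x • divPow S J x r) (divPow S J x r) := by
        rw [stationary, pow_succ, mul_smul, relLength_smul (hreg.pow r)]
    _ = Module.length R (S ⧸ x • (⊤ : Submodule R S)) := by
        rw [relLength_smul_self_eq hreg le_top hfin, relLength_top_right]

lemma eventually_hilbertSamuel_span_singleton {x : R} (hreg : IsSMulRegular R x) :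
    ∀ᶠ r in Filter.atTop,
      hilbertSamuel (Ideal.span {x}) r = Module.length R (R ⧸ Ideal.span {x}) := by
  have range_eq_top : (Algebra.linearMap R R).range = ⊤ :=
    LinearMap.range_eq_top.2 Function.surjective_id
  have := eventually_hilbertSamuel_eq_length (S := R) Function.injective_id
    (range_eq_top ▸ .of_subsingleton) hreg (Ideal.mem_span_singleton_self x)
    (Ideal.map_id (Ideal.span {x})).le
  rwa [← Submodule.ideal_span_singleton_smul, smul_eq_mul, Ideal.mul_top] at this

end Reduction

section PiQuotient

open scoped Pointwise

variable {R ι : Type*} [CommRing R] [Fintype ι]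

lemma length_pi_quotient_smul_top (M : ι → Type*) [∀ i, AddCommGroup (M i)] [∀ i, Module R (M i)]
    (x : R) :
    Module.length R ((∀ i, M i) ⧸ x • (⊤ : Submodule R (∀ i, M i))) =
      ∑ i, Module.length R (M i ⧸ x • (⊤ : Submodule R (M i))) := by
  classical
  have smul_top_eq_pi : x • (⊤ : Submodule R (∀ i, M i)) =
      Submodule.pi Set.univ fun i ↦ x • (⊤ : Submodule R (M i)) := by
    ext m
    simp only [Submodule.mem_smul_pointwise_iff_exists, Submodule.mem_pi, Submodule.mem_top,
      true_and, Set.mem_univ, forall_const]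
    exact ⟨fun ⟨b, hb⟩ i ↦ ⟨b i, congrFun hb i⟩,
      fun h ↦ ⟨fun i ↦ (h i).choose, funext fun i ↦ (h i).choose_spec⟩⟩
  rw [smul_top_eq_pi, (Submodule.quotientPi _).length_eq, Module.length_pi_of_fintype]

lemma length_quotient_smul_top_of_surjective {S : Type*} [CommRing S] [Algebra R S]
    (hsurj : Function.Surjective (algebraMap R S)) (x : R) :
    Module.length R (S ⧸ x • (⊤ : Submodule R S)) =
      Module.length S (S ⧸ Ideal.span {algebraMap R S x}) := by
  have restrictScalars_span :
      (Ideal.span {algebraMap R S x}).restrictScalars R = x • (⊤ : Submodule R S) := by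
    ext b
    simp [Submodule.mem_smul_pointwise_iff_exists, Ideal.mem_span_singleton', Algebra.smul_def,
      mul_comm]
  rw [← Module.length_eq_of_surjective hsurj, ← restrictScalars_span,
    (Submodule.Quotient.restrictScalarsEquiv R _).length_eq]

end PiQuotient

section Generators

lemma exists_forall_notMem_of_card_le_residueField {R M ι : Type*} [CommRing R] [IsLocalRing R]
    [AddCommGroup M] [Module R M] {K : ι → Submodule R M} (hK : ∀ i, K i ≠ ⊤) (t : Finset ι)
    (ht : t.card ≤ ENat.card (ResidueField R)) : ∃ x, ∀ i ∈ t, x ∉ K i := by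
  classical
  induction t using Finset.induction_on with
  | empty => exact ⟨0, by simp⟩
  | insert j t hj ih =>
    rw [Finset.card_insert_of_notMem hj, Nat.cast_add_one] at ht
    obtain ⟨x, hx⟩ := ih (le_self_add.trans ht)
    obtain ⟨y, hy⟩ := SetLike.exists_not_mem_of_ne_top (K j) (hK j) rfl
    by_cases hxj : x ∈ K j
    swap
    · exact ⟨x, by simpa [hxj] using hx⟩
    -- `y + c • x` avoids `K j` for all `c`, and each `K i` for all `c` outside one residue class.
    choose lift residue_lift using residue_surjective (R := R)
    by_contra! covered
    have meets (a : ResidueField R) : ∃ i : t, y + lift a • x ∈ K i := by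
      obtain ⟨i, hi, hmem⟩ := covered (y + lift a • x)
      obtain rfl | hit := Finset.mem_insert.1 hi
      · exact absurd (((K i).add_mem_iff_left ((K i).smul_mem _ hxj)).1 hmem) hy
      · exact ⟨⟨i, hit⟩, hmem⟩
    choose g hg using meets
    have g_injective : Function.Injective g := by
      intro a b hab
      by_contra hne
      have isUnit_sub : IsUnit (lift a - lift b) := by
        rw [← residue_ne_zero_iff_isUnit, map_sub, residue_lift, residue_lift]
        exact sub_ne_zero.2 hne
      have sub_smul_mem : (lift a - lift b) • x ∈ K (g b) := by
        rw [sub_smul, ← add_sub_add_left_eq_sub _ _ y]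
        exact (K (g b)).sub_mem (hab ▸ hg a) (hg b)
      exact hx _ (g b).2 (((K (g b)).smul_mem_iff_of_isUnit isUnit_sub).1 sub_smul_mem)
    have card_le : ENat.card (ResidueField R) ≤ t.card := by
      simpa using ENat.card_le_card_of_injective g_injective
    exact absurd (ht.trans card_le) (by exact_mod_cast (Nat.lt_succ_self _).not_ge)

lemma eq_span_singleton_of_notMem_maximalIdeal_mul {S : Type*} [CommRing S] [IsLocalRing S]
    {I : Ideal S} (hI : I.IsPrincipal) {y : S} (hy : y ∈ I) (hy' : y ∉ maximalIdeal S * I) :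
    I = Ideal.span {y} := by
  obtain ⟨g, rfl⟩ := hI
  obtain ⟨u, rfl⟩ := Ideal.mem_span_singleton'.1 hy
  have isUnit_u : IsUnit u := by
    by_contra hu
    exact hy' (Ideal.mul_mem_mul hu (Ideal.mem_span_singleton_self g))
  exact (Ideal.span_singleton_mul_left_unit isUnit_u g).symm

variable {R ι : Type*} [CommRing R] [IsLocalRing R] [Fintype ι] {S : ι → Type*}
  [∀ i, CommRing (S i)] [∀ i, Nontrivial (S i)] [∀ i, Algebra R (S i)] {J : Ideal R}

lemma exists_mem_forall_map_eq_span_singleton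
    (hsurj : ∀ i, Function.Surjective (algebraMap R (S i)))
    (hne : ∀ i, J.map (algebraMap R (S i)) ≠ ⊥)
    (hprin : ∀ i, (J.map (algebraMap R (S i))).IsPrincipal)
    (hres : Fintype.card ι ≤ ENat.card (ResidueField R)) :
    ∃ x ∈ J, ∀ i, J.map (algebraMap R (S i)) = Ideal.span {algebraMap R (S i) x} := by
  have (i : ι) : IsLocalRing (S i) := .of_surjective' _ (hsurj i)
  let K (i : ι) : Submodule R J :=
    ((maximalIdeal (S i) * J.map (algebraMap R (S i))).comap (algebraMap R (S i))).submoduleOf J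
  have hK (i : ι) : K i ≠ ⊤ := by
    intro hi
    refine hne i (Submodule.eq_bot_of_le_smul_of_le_jacobson_bot (maximalIdeal (S i)) _
      (hprin i).fg ?_ (maximalIdeal_le_jacobson ⊥))
    exact Ideal.map_le_iff_le_comap.2 (Submodule.submoduleOf_eq_top.1 hi)
  obtain ⟨⟨x, hxJ⟩, hx⟩ := exists_forall_notMem_of_card_le_residueField hK Finset.univ hres
  exact ⟨x, hxJ, fun i ↦ eq_span_singleton_of_notMem_maximalIdeal_mul (hprin i)
    (Ideal.mem_map_of_mem _ hxJ) (hx i (Finset.mem_univ i))⟩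

end Generators

theorem statement_general {R ι : Type*} [CommRing R] [IsLocalRing R] [Fintype ι] {S : ι → Type*}
    [∀ i, CommRing (S i)] [∀ i, Nontrivial (S i)] [∀ i, Algebra R (S i)]
    (hsurj : ∀ i, Function.Surjective (algebraMap R (S i)))
    (hinj : Function.Injective (algebraMap R (∀ i, S i)))
    (hcoker : IsFiniteLength R ((∀ i, S i) ⧸ (Algebra.linearMap R (∀ i, S i)).range))
    (J : Ideal R) (hreg : ∃ w ∈ J, ∀ i, IsSMulRegular (S i) w)
    (hres : Fintype.card ι ≤ ENat.card (ResidueField R))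
    (hprin : ∀ i, (J.map (algebraMap R (S i))).IsPrincipal) :
    ∀ᶠ r in Filter.atTop,
      hilbertSamuel J r = ∑ i, hilbertSamuel (J.map (algebraMap R (S i))) r := by
  obtain ⟨w, hwJ, hw⟩ := hreg
  have hne (i : ι) : J.map (algebraMap R (S i)) ≠ ⊥ := by
    intro hbot
    have hw_zero : algebraMap R (S i) w = 0 := by
      simpa [hbot] using Ideal.mem_map_of_mem (algebraMap R (S i)) hwJ
    exact IsSMulRegular.not_zero (hw_zero ▸ (isSMulRegular_algebraMap_iff (S i)).2 (hw i))
  obtain ⟨x, hxJ, hx⟩ := exists_mem_forall_map_eq_span_singleton hsurj hne hprin hres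
  have hxreg (i : ι) : IsSMulRegular (S i) x := by
    obtain ⟨c, hc⟩ := Ideal.mem_span_singleton'.1 (hx i ▸ Ideal.mem_map_of_mem _ hwJ)
    exact (isSMulRegular_algebraMap_iff (S i)).1
      (.of_mul (hc ▸ (isSMulRegular_algebraMap_iff (S i)).2 (hw i)))
  have map_le : J.map (algebraMap R (∀ i, S i)) ≤ Ideal.span {algebraMap R (∀ i, S i) x} := by
    refine Ideal.map_le_iff_le_comap.2 fun y hy ↦ ?_
    have hdvd (i : ι) := Ideal.mem_span_singleton'.1 (hx i ▸ Ideal.mem_map_of_mem _ hy)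
    choose c hc using hdvd
    exact Ideal.mem_span_singleton'.2 ⟨c, funext hc⟩
  filter_upwards [
    eventually_hilbertSamuel_eq_length hinj hcoker (IsSMulRegular.pi hxreg) hxJ map_le,
    Filter.eventually_all.2 fun i ↦ eventually_hilbertSamuel_span_singleton
      ((isSMulRegular_algebraMap_iff (S i)).2 (hxreg i))] with r hJ hJi
  simp only [hJ, hx, hJi, length_pi_quotient_smul_top, length_quotient_smul_top_of_surjective,
    hsurj, WithBot.coe_sum]

section Projections

variable {O : Type} [CommRing O] {s : ℕ} {n : Fin s → ℕ} {T : Subalgebra O (A O s n)}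

instance (i : Fin s) : Algebra T (Ti O s n T i) := (ψ O s n T i).toRingHom.toAlgebra

instance (i : Fin s) : IsScalarTower O T (Ti O s n T i) :=
  .of_algebraMap_eq fun c ↦ ((ψ O s n T i).commutes c).symm

lemma algebraMap_Ti_surjective (i : Fin s) :
    Function.Surjective (algebraMap T (Ti O s n T i)) := by
  rintro ⟨_, t, ht, rfl⟩
  exact ⟨⟨t, ht⟩, rfl⟩

lemma algebraMap_pi_Ti_injective : Function.Injective (algebraMap T (∀ i, Ti O s n T i)) :=
  fun _ _ h ↦ Subtype.ext <| funext fun i ↦ congrArg Subtype.val (congrFun h i)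

lemma isFiniteLength_pi_Ti_quotient_range [Finite (A O s n ⧸ T.toSubmodule)] :
    IsFiniteLength T ((∀ i, Ti O s n T i) ⧸ (Algebra.linearMap T (∀ i, Ti O s n T i)).range) := by
  let val : (∀ i, Ti O s n T i) →ₗ[O] A O s n :=
    LinearMap.piMap fun i ↦ (Ti O s n T i).val.toLinearMap
  have : Finite ((∀ i, Ti O s n T i) ⧸ T.toSubmodule.comap val) :=
    .of_injective (Submodule.mapQ _ T.toSubmodule val le_rfl) <| LinearMap.ker_eq_bot.1 <|
      (Submodule.ker_mapQ _ _ _ _).trans (Submodule.mkQ_map_self _)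
  have range_eq_comap : (Algebra.linearMap T (∀ i, Ti O s n T i)).range.restrictScalars O =
      T.toSubmodule.comap val := by
    ext b
    exact ⟨fun ⟨t, ht⟩ ↦ ht ▸ t.2, fun hb ↦ ⟨⟨_, hb⟩, rfl⟩⟩
  have : Finite ((∀ i, Ti O s n T i) ⧸ (Algebra.linearMap T (∀ i, Ti O s n T i)).range) :=
    .of_equiv _ (((Submodule.quotEquivOfEq _ _ range_eq_comap).symm.trans
      (Submodule.Quotient.restrictScalarsEquiv O _)).toEquiv)
  exact isFiniteLength_iff_isNoetherian_isArtinian.2 ⟨inferInstance, inferInstance⟩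

lemma isSMulRegular_Ti_algebraMap [IsDomain O] {w : O} (hw : w ≠ 0) (i : Fin s) :
    IsSMulRegular (Ti O s n T i) (algebraMap O T w) :=
  (isSMulRegular_algebraMap_iff T).2 <| .of_ne_zero hw

lemma isLocalHom_algebraMap (i : Fin s) (j : Fin (n i)) : IsLocalHom (algebraMap O T) := by
  let eval : T →+* O := (Pi.evalRingHom (fun _ ↦ O) j).comp
    ((Pi.evalRingHom (fun i ↦ Fin (n i) → O) i).comp T.val.toRingHom)
  have eval_algebraMap : eval.comp (algebraMap O T) = RingHom.id O := rfl
  have : IsLocalHom (eval.comp (algebraMap O T)) := eval_algebraMap ▸ inferInstance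
  exact isLocalHom_of_comp _ eval

lemma card_residueField_le [IsLocalRing O] [IsLocalRing T] (i : Fin s) (j : Fin (n i)) :
    ENat.card (ResidueField O) ≤ ENat.card (ResidueField T) := by
  have := isLocalHom_algebraMap (T := T) i j
  exact ENat.card_le_card_of_injective (ResidueField.map (algebraMap O T)).injective

end Projections

lemma exists_ne_zero_algebraMap_mem {R B : Type*} [CommRing R] [Infinite R] [CommRing B]
    [Algebra R B] (I : Ideal B) [Finite (B ⧸ I)] : ∃ w : R, w ≠ 0 ∧ algebraMap R B w ∈ I := by
  have not_injective := not_injective_infinite_finite (algebraMap R (B ⧸ I))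
  rw [injective_iff_map_eq_zero] at not_injective
  push Not at not_injective
  obtain ⟨w, hw, hw0⟩ := not_injective
  exact ⟨w, hw0, Ideal.Quotient.eq_zero_iff_mem.1 hw⟩

lemma infinite_of_isDiscreteValuationRing (R : Type*) [CommRing R] [IsDomain R]
    [IsDiscreteValuationRing R] : Infinite R :=
  not_finite_iff_infinite.1 fun _ ↦
    IsDiscreteValuationRing.not_isField R (Finite.isField_of_domain R)

/-- (Proposition 2.3.)  If the residue field of `O` has at least `s` elements and each
`J_i ⊆ T_i` is principal, then `e(J, T) = ∑ i, e(J_i, T_i)`: for all sufficiently large `r`,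
`length_T (J^r/J^(r+1)) = ∑ i, length_{T_i} (J_i^r/J_i^(r+1))`. -/
theorem statement
    -- `O` is the valuation ring of a finite extension of `ℚ_p`:
    [IsAdicComplete (maximalIdeal O) O] [Finite (ResidueField O)]
    [CharP (ResidueField O) p]
    (hs : 0 < s) (hn : ∀ i, 0 < n i)
    -- `T` is a local complete `O`-subalgebra of full rank in `A`:
    [IsLocalRing T] [IsAdicComplete (maximalIdeal T) T]
    (hfullrank : Finite ((A O s n) ⧸ T.toSubmodule))
    -- `J ⊆ T` is an ideal of finite index:
    (J : Ideal T) (hJ : Finite (T ⧸ J))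
    -- the residue field of `O` has at least `s` elements:
    (hres : s ≤ Nat.card (ResidueField O))
    -- each `J_i` is principal:
    (hprin : ∀ i, (Ji O s n T J i).IsPrincipal) :
    ∃ r₀ : ℕ, ∀ r : ℕ, r₀ ≤ r →
      hilbertSamuel J r = ∑ i, hilbertSamuel (Ji O s n T J i) r := by
  have := infinite_of_isDiscreteValuationRing O
  obtain ⟨w, hw, hwJ⟩ := exists_ne_zero_algebraMap_mem (R := O) J
  have (i : Fin s) : Nonempty (Fin (n i)) := ⟨0, hn i⟩
  have hresT : Fintype.card (Fin s) ≤ ENat.card (ResidueField T) := by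
    refine le_trans ?_ (card_residueField_le ⟨0, hs⟩ ⟨0, hn _⟩)
    rw [Fintype.card_fin]
    exact (Nat.cast_le.2 hres).trans (ENat.card_eq_coe_natCard _).ge
  exact Filter.eventually_atTop.1 <| statement_general (S := (Ti O s n T ·))
    algebraMap_Ti_surjective algebraMap_pi_Ti_injective isFiniteLength_pi_Ti_quotient_range J
    ⟨_, hwJ, isSMulRegular_Ti_algebraMap hw⟩ hresT hprin

end Stmt3
end
end

section
/- (Corollary 2.7.) Assume that the residue field F_ϖ of O has at least s elements (equivalently #F_ϖ^× ≥ s−1) and that each ideal J_i ⊆ T_i is principal. Then e(J,T) = ∑_{i=1}^s length_{T_i}(T_i/J_i). Concretely: for all sufficiently large natural numbers r, the length of J^r/J^{r+1} as a T-module equals the sum over i = 1,…,s of the lengths of T_i/J_i as T_i-modules. -/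
/-!
Setting: `O` is the valuation ring of a finite extension of `ℚ_p`, abstracted as a complete
discrete valuation ring with finite residue field of characteristic `p`.
`A = ∏ i, O^(n i)`, `T ⊆ A` a local complete `O`-subalgebra of full rank (`A/T` finite),
`J ⊆ T` an ideal of finite index, `T_i = φ_i(T)`, `J_i = φ_i(J)`.
-/

open IsLocalRing

set_option synthInstance.maxHeartbeats 1000000
set_option maxHeartbeats 1000000

noncomputable section

namespace Stmt4

variable (p : ℕ) [Fact (Nat.Prime p)]
variable (O : Type) [CommRing O] [IsDomain O] [IsDiscreteValuationRing O]
variable (s : ℕ) (n : Fin s → ℕ)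

/-- The ambient algebra `A = ∏_{i=1}^s O^{n_i}`. -/
abbrev A : Type := ∀ i : Fin s, Fin (n i) → O

/-- The canonical projection `φ_i : A → A_i = O^{n_i}`. -/
def φ (i : Fin s) : A O s n →ₐ[O] (Fin (n i) → O) :=
  Pi.evalAlgHom O (fun i => Fin (n i) → O) i

variable (T : Subalgebra O (A O s n))

/-- `T_i = φ_i(T)`. -/
def Ti (i : Fin s) : Subalgebra O (Fin (n i) → O) := T.map (φ O s n i)

/-- The projection `T → T_i` induced by `φ_i`. -/
def ψ (i : Fin s) : T →ₐ[O] Ti O s n T i :=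
  AlgHom.codRestrict ((φ O s n i).comp T.val) (Ti O s n T i)
    (fun x => ⟨x.1, x.2, rfl⟩)

/-- `J_i = φ_i(J)`, as an ideal of `T_i`. -/
def Ji (J : Ideal T) (i : Fin s) : Ideal (Ti O s n T i) :=
  J.map (ψ O s n T i)

/-- The natural inclusion `T → ∏_{i=1}^s T_i`. -/
def Ψ : T →ₐ[O] ∀ i, Ti O s n T i :=
  Pi.algHom O _ (fun i => ψ O s n T i)

/-- The ideal `∏_{i=1}^s J_i` of the product ring `∏_{i=1}^s T_i`, consisting of the tuples
whose `i`-th entry lies in `J_i`. -/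
def prodIdeal (J : Ideal T) : Ideal (∀ i, Ti O s n T i) where
  carrier := {x | ∀ i, x i ∈ Ji O s n T J i}
  add_mem' hx hy i := (Ji O s n T _ i).add_mem (hx i) (hy i)
  zero_mem' i := (Ji O s n T _ i).zero_mem
  smul_mem' c x hx i := (Ji O s n T _ i).smul_mem (c i) (hx i)

/-- The length of a module: the Krull dimension of its lattice of submodules. -/
def moduleLength (R M : Type*) [Semiring R] [AddCommMonoid M] [Module R M] : WithBot ℕ∞ :=
  Order.krullDim (Submodule R M)

/-- The Hilbert–Samuel function `r ↦ length_T (J^r / J^(r+1))` of an ideal `J` of a ring `T`. -/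
def hilbertSamuel {T : Type*} [CommRing T] (J : Ideal T) (r : ℕ) : WithBot ℕ∞ :=
  moduleLength T (↥(J ^ r) ⧸ Submodule.comap (J ^ r).subtype (J ^ (r + 1)))

open Filter

/-!
A vector space over a field `k` is not a union of `#k` proper subspaces, so, by Nakayama, a single
`x ∈ J` generates every `J_i` at once. In `B = ∏ i, T_i` multiplication by `x` is injective and
`J B = x B`, hence `x^r B / x^(r+1) B ≅ B / J B ≅ ∏ i, T_i / J_i` for every `r`. Multiplication by
`x` maps `x^r B / J^r` isomorphically onto `x^(r+1) B / x J^r`, which surjects onto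
`x^(r+1) B / J^(r+1)`, so the lengths of the modules `x^r B / J^r` do not increase with `r`; they
start at the finite length of `B / T` and therefore stabilize. From then on, computing the length
of `x^r B / J^(r+1)` through `J^r` and through `x^(r+1) B` shows that `J^r / J^(r+1)` and
`x^r B / x^(r+1) B` have the same length.
-/

section RelativeLength

variable {R M L : Type*} [Ring R] [AddCommGroup M] [Module R M] [AddCommGroup L] [Module R L]

/-- The length of `P / (N ∩ P)` for submodules `N` and `P` of a common module, so that lengths of
successive quotients in a filtration can be compared inside that module. -/
def relLength (N P : Submodule R M) : ℕ∞ :=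
  Module.length R (P ⧸ N.submoduleOf P)

lemma relLength_top_right (N : Submodule R M) : relLength N ⊤ = Module.length R (M ⧸ N) :=
  (Submodule.Quotient.equiv _ _ Submodule.topEquiv <| by
    ext m; simp [Submodule.submoduleOf]).length_eq

lemma relLength_map_of_injective {f : M →ₗ[R] L} (hf : Function.Injective f)
    (N P : Submodule R M) : relLength (N.map f) (P.map f) = relLength N P := by
  refine (Submodule.Quotient.equiv _ _ (P.equivMapOfInjective f hf) ?_).length_eq.symm
  ext q
  obtain ⟨m, rfl⟩ := (P.equivMapOfInjective f hf).surjective q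
  simp [Submodule.submoduleOf, hf.eq_iff]

lemma relLength_anti_left (P : Submodule R M) : Antitone fun N ↦ relLength N P := fun _ _ h ↦
  Module.length_le_of_surjective (Submodule.factor (Submodule.comap_mono h))
    (Submodule.factor_surjective _)

lemma relLength_add {N P Q : Submodule R M} (hNP : N ≤ P) (hPQ : P ≤ Q) :
    relLength N P + relLength P Q = relLength N Q := by
  let incl : (P ⧸ N.submoduleOf P) →ₗ[R] Q ⧸ N.submoduleOf Q :=
    Submodule.mapQ _ _ (Submodule.inclusion hPQ) fun _ hm ↦ hm
  let proj : (Q ⧸ N.submoduleOf Q) →ₗ[R] Q ⧸ P.submoduleOf Q :=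
    Submodule.factor (Submodule.comap_mono hNP)
  have incl_injective : Function.Injective incl := by
    rw [← LinearMap.ker_eq_bot]
    exact (Submodule.ker_mapQ ..).trans (Submodule.mkQ_map_self _)
  have exact_incl_proj : Function.Exact incl proj := by
    rw [LinearMap.exact_iff]
    refine (Submodule.ker_mapQ ..).trans (Eq.trans ?_ (Submodule.range_mapQ ..).symm)
    rw [Submodule.comap_id, Submodule.range_inclusion]
    rfl
  exact (Module.length_eq_add_of_exact incl proj incl_injective
    (Submodule.factor_surjective _) exact_incl_proj).symm

theorem eventually_relLength_succ_eq_length_quotient_range {μ : M →ₗ[R] M}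
    (hμ : Function.Injective μ) {N : ℕ → Submodule R M} (hN : Antitone N)
    (hN_le : ∀ r, N r ≤ LinearMap.range (μ ^ r)) (hμN : ∀ r, (N r).map μ ≤ N (r + 1))
    (hfin : Module.length R (M ⧸ N 0) ≠ ⊤) :
    ∀ᶠ r in atTop, relLength (N (r + 1)) (N r) = Module.length R (M ⧸ LinearMap.range μ) := by
  let P (r : ℕ) : Submodule R M := LinearMap.range (μ ^ r)
  let c (r : ℕ) : ℕ∞ := relLength (N r) (P r)
  have P_zero : P 0 = ⊤ := LinearMap.range_id
  have P_succ (r : ℕ) : P (r + 1) = (P r).map μ := by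
    rw [← LinearMap.range_comp, ← Module.End.mul_eq_comp, ← pow_succ']
  have P_succ_le (r : ℕ) : P (r + 1) ≤ P r := by
    simp only [P, pow_succ]
    exact LinearMap.range_comp_le_range μ (μ ^ r)
  have length_P (r : ℕ) :
      relLength (P (r + 1)) (P r) = Module.length R (M ⧸ LinearMap.range μ) := by
    induction r with
    | zero => simp only [P_zero, relLength_top_right, P, zero_add, pow_one]
    | succ r ih => rw [P_succ (r + 1), P_succ r, relLength_map_of_injective hμ, ← P_succ, ih]
  have c_antitone : Antitone c := antitone_nat_of_succ_le fun r ↦ calc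
    c (r + 1) ≤ relLength ((N r).map μ) (P (r + 1)) := relLength_anti_left _ (hμN r)
    _ = c r := by rw [P_succ, relLength_map_of_injective hμ]
  have c_ne_top (r : ℕ) : c r ≠ ⊤ := by
    refine ne_top_of_le_ne_top ?_ (c_antitone r.zero_le)
    rwa [← relLength_top_right, ← P_zero] at hfin
  obtain ⟨r₀, c_eq⟩ := WellFoundedLT.antitone_chain_condition c_antitone
  filter_upwards [eventually_ge_atTop r₀] with r hr
  have c_succ : c (r + 1) = c r := (c_eq _ (hr.trans r.le_succ)).symm.trans (c_eq r hr)
  have key : relLength (N (r + 1)) (N r) + c r = relLength (P (r + 1)) (P r) + c r := calc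
    _ = relLength (N (r + 1)) (P r) := relLength_add (hN r.le_succ) (hN_le r)
    _ = c (r + 1) + relLength (P (r + 1)) (P r) := (relLength_add (hN_le _) (P_succ_le r)).symm
    _ = relLength (P (r + 1)) (P r) + c r := by rw [c_succ, add_comm]
  rw [← length_P r]
  exact ENat.add_left_injective_of_ne_top (c_ne_top r) key

end RelativeLength

section Ideal

variable {S B : Type*} [CommRing S] [CommRing B] [Algebra S B]

lemma range_mulLeft_eq_restrictScalars_span_singleton (b : B) :
    LinearMap.range (LinearMap.mulLeft S b) = (Ideal.span {b}).restrictScalars S := by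
  ext c
  simp [Ideal.mem_span_singleton', mul_comm b]

theorem eventually_relLength_pow_succ_eq_length_quotient_map
    (hinj : Function.Injective (algebraMap S B))
    (hfin : IsFiniteLength S (B ⧸ LinearMap.range (Algebra.linearMap S B)))
    {J : Ideal S} {x : S} (hxJ : x ∈ J) (hx : algebraMap S B x ∈ nonZeroDivisors B)
    (hJ : J.map (algebraMap S B) = Ideal.span {algebraMap S B x}) :
    ∀ᶠ r in atTop, relLength (J ^ (r + 1)) (J ^ r) =
      Module.length S (B ⧸ (J.map (algebraMap S B)).restrictScalars S) := by
  let μ : B →ₗ[S] B := LinearMap.mulLeft S (algebraMap S B x)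
  let N (r : ℕ) : Submodule S B := Submodule.map (Algebra.linearMap S B) (J ^ r)
  have μ_injective : Function.Injective μ := fun a b h ↦
    (mul_cancel_left_mem_nonZeroDivisors hx).mp h
  have N_antitone : Antitone N := fun _ _ h ↦ Submodule.map_mono (Ideal.pow_le_pow_right h)
  have N_le (r : ℕ) : N r ≤ LinearMap.range (μ ^ r) := by
    rw [LinearMap.pow_mulLeft, range_mulLeft_eq_restrictScalars_span_singleton,
      ← Ideal.span_singleton_pow, ← hJ, ← Ideal.map_pow]
    rintro _ ⟨y, hy, rfl⟩
    exact Ideal.mem_map_of_mem _ hy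
  have map_N_le (r : ℕ) : (N r).map μ ≤ N (r + 1) := by
    rintro _ ⟨_, ⟨y, hy, rfl⟩, rfl⟩
    refine ⟨x * y, ?_, by simp [μ]⟩
    rw [pow_succ']
    exact Ideal.mul_mem_mul hxJ hy
  have length_ne_top : Module.length S (B ⧸ N 0) ≠ ⊤ := by
    rwa [Module.length_ne_top_iff, show N 0 = LinearMap.range (Algebra.linearMap S B) by
      simp [N, Ideal.one_eq_top]]
  rw [hJ, ← range_mulLeft_eq_restrictScalars_span_singleton]
  filter_upwards [eventually_relLength_succ_eq_length_quotient_range μ_injective N_antitone N_le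
    map_N_le length_ne_top] with r hr
  rwa [relLength_map_of_injective hinj] at hr

end Ideal

section Avoidance

variable {R M ι : Type*} [CommRing R] [IsLocalRing R] [AddCommGroup M] [Module R M]

lemma residue_eq_of_add_smul_mem {N : Submodule R M} {x y : M} (hx : x ∉ N) {a b : R}
    (ha : y + a • x ∈ N) (hb : y + b • x ∈ N) : residue R a = residue R b := by
  by_contra hab
  have isUnit_sub : IsUnit (a - b) := by
    rwa [← residue_ne_zero_iff_isUnit, map_sub, sub_ne_zero]
  refine hx ((N.smul_mem_iff_of_isUnit isUnit_sub).mp ?_)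
  simpa [sub_smul] using N.sub_mem ha hb

lemma exists_forall_add_smul_notMem {N : ι → Submodule R M} {t : Finset ι} {x : M}
    (hx : ∀ i ∈ t, x ∉ N i) (y : M) (ht : t.card < ENat.card (ResidueField R)) :
    ∃ a : R, ∀ i ∈ t, y + a • x ∉ N i := by
  by_contra! h
  choose a ha using residue_surjective (R := R)
  choose i hit hiN using fun k ↦ h (a k)
  have i_injective : Function.Injective fun k ↦ (⟨i k, hit k⟩ : t) := fun k l hkl ↦ by
    rw [← ha k, ← ha l]
    refine residue_eq_of_add_smul_mem (hx _ (hit k)) (hiN k) ?_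
    rw [show i k = i l from congrArg Subtype.val hkl]
    exact hiN l
  have := ENat.card_le_card_of_injective i_injective
  simp only [ENat.card_eq_coe_fintype_card, Fintype.card_coe] at this
  exact ht.not_ge this

theorem exists_forall_notMem_of_card_le {N : ι → Submodule R M} {t : Finset ι}
    (hN : ∀ i ∈ t, N i ≠ ⊤) (ht : t.card ≤ ENat.card (ResidueField R)) :
    ∃ x, ∀ i ∈ t, x ∉ N i := by
  classical
  induction t using Finset.induction_on with
  | empty => exact ⟨0, by simp⟩
  | insert i t hi ih =>
    rw [Finset.card_insert_of_notMem hi, Nat.cast_add_one, ENat.add_one_le_iff (by simp)] at ht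
    rw [Finset.forall_mem_insert] at hN
    obtain ⟨x, hx⟩ := ih hN.2 ht.le
    by_cases hxi : x ∈ N i
    · obtain ⟨y, -, hy⟩ := SetLike.exists_of_lt hN.1.lt_top
      obtain ⟨a, ha⟩ := exists_forall_add_smul_notMem hx y ht
      refine ⟨y + a • x, Finset.forall_mem_insert .. |>.mpr ⟨?_, ha⟩⟩
      rwa [(N i).add_mem_iff_left ((N i).smul_mem a hxi)]
    · exact ⟨x, Finset.forall_mem_insert .. |>.mpr ⟨hxi, hx⟩⟩

end Avoidance

section CommonGenerator

lemma span_singleton_eq_of_notMem_maximalIdeal_smul {R M : Type*} [CommRing R] [IsLocalRing R]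
    [AddCommGroup M] [Module R M] {P : Submodule R M} [P.IsPrincipal] {x : M} (hxP : x ∈ P)
    (hx : x ∉ maximalIdeal R • P) : Submodule.span R {x} = P := by
  obtain ⟨a, rfl⟩ := (Submodule.IsPrincipal.mem_iff_eq_smul_generator P).mp hxP
  have isUnit_a : IsUnit a := by
    by_contra ha
    exact hx (Submodule.smul_mem_smul ha (Submodule.IsPrincipal.generator_mem P))
  rw [Submodule.span_singleton_smul_eq isUnit_a, Submodule.IsPrincipal.span_singleton_generator]

theorem exists_forall_span_singleton_eq_range {R M ι : Type*} {Q : ι → Type*} [CommRing R]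
    [IsLocalRing R] [AddCommGroup M] [Module R M] [∀ i, AddCommGroup (Q i)] [∀ i, Module R (Q i)]
    [Finite ι] (hι : ENat.card ι ≤ ENat.card (ResidueField R)) (f : ∀ i, M →ₗ[R] Q i)
    [∀ i, (LinearMap.range (f i)).IsPrincipal] :
    ∃ x, ∀ i, Submodule.span R {f i x} = LinearMap.range (f i) := by
  classical
  have := Fintype.ofFinite ι
  let N (i : ι) : Submodule R M := (maximalIdeal R • LinearMap.range (f i)).comap (f i)
  let t : Finset ι := {i | LinearMap.range (f i) ≠ ⊥}
  have N_ne_top : ∀ i ∈ t, N i ≠ ⊤ := fun i hi hNi ↦ by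
    refine (Finset.mem_filter.mp hi).2 (Submodule.eq_bot_of_le_smul_of_le_jacobson_bot
      (maximalIdeal R) _ (Submodule.IsPrincipal.fg inferInstance) ?_ (maximalIdeal_le_jacobson ⊥))
    exact LinearMap.range_le_iff_comap.mpr hNi
  have card_le : (t.card : ℕ∞) ≤ ENat.card (ResidueField R) := by
    refine le_trans ?_ hι
    simpa using t.card_le_univ
  obtain ⟨x, hx⟩ := exists_forall_notMem_of_card_le N_ne_top card_le
  refine ⟨x, fun i ↦ ?_⟩
  have mem_range : f i x ∈ LinearMap.range (f i) := LinearMap.mem_range_self _ x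
  by_cases hi : LinearMap.range (f i) = ⊥
  · rw [hi, Submodule.mem_bot] at mem_range
    rw [hi, mem_range, Submodule.span_zero_singleton]
  · exact span_singleton_eq_of_notMem_maximalIdeal_smul mem_range (hx i (by simp [t, hi]))

theorem exists_mem_forall_map_eq_span_singleton {S ι : Type*} {B : ι → Type*} [CommRing S]
    [IsLocalRing S] [∀ i, CommRing (B i)] [∀ i, Algebra S (B i)] [Finite ι]
    (hι : ENat.card ι ≤ ENat.card (ResidueField S))
    (hsurj : ∀ i, Function.Surjective (algebraMap S (B i))) (J : Ideal S)
    (hJ : ∀ i, (J.map (algebraMap S (B i))).IsPrincipal) :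
    ∃ x ∈ J, ∀ i, J.map (algebraMap S (B i)) = Ideal.span {algebraMap S (B i) x} := by
  let f (i : ι) : J →ₗ[S] B i := (Algebra.linearMap S (B i)).domRestrict J
  have range_f (i : ι) :
      LinearMap.range (f i) = (J.map (algebraMap S (B i))).restrictScalars S := by
    ext b
    simp [f, Ideal.mem_map_iff_of_surjective _ (hsurj i)]
  have (i : ι) : (LinearMap.range (f i)).IsPrincipal := by
    obtain ⟨g, hg⟩ := hJ i
    exact ⟨g, by rw [range_f, hg, Submodule.restrictScalars_span _ _ (hsurj i)]⟩
  obtain ⟨x, hx⟩ := exists_forall_span_singleton_eq_range hι f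
  refine ⟨x, x.2, fun i ↦ Submodule.restrictScalars_injective S _ _ ?_⟩
  rw [← range_f, ← hx, Ideal.span, Submodule.restrictScalars_span _ _ (hsurj i)]
  rfl

end CommonGenerator

section Product

variable {S ι : Type*} {B : ι → Type*} [CommRing S] [∀ i, CommRing (B i)] [∀ i, Algebra S (B i)]

lemma length_quotient_pi [Fintype ι] (hsurj : ∀ i, Function.Surjective (algebraMap S (B i)))
    (I : ∀ i, Ideal (B i)) :
    Module.length S ((∀ i, B i) ⧸ (Ideal.pi I).restrictScalars S) =
      ∑ i, Module.length (B i) (B i ⧸ I i) := by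
  classical
  have pi_eq : (Ideal.pi I).restrictScalars S =
      Submodule.pi Set.univ fun i ↦ (I i).restrictScalars S := by
    ext b
    simp [Ideal.mem_pi]
  rw [pi_eq, (Submodule.quotientPi fun i ↦ (I i).restrictScalars S).length_eq,
    Module.length_pi_of_fintype]
  refine Finset.sum_congr rfl fun i _ ↦ ?_
  rw [(Submodule.Quotient.restrictScalarsEquiv S (I i)).length_eq,
    Module.length_eq_of_surjective (hsurj i)]

lemma map_algebraMap_pi_eq_pi_map {J : Ideal S} {x : S} (hxJ : x ∈ J)
    (hx : ∀ i, J.map (algebraMap S (B i)) = Ideal.span {algebraMap S (B i) x}) :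
    J.map (algebraMap S (∀ i, B i)) = Ideal.pi fun i ↦ J.map (algebraMap S (B i)) := by
  refine le_antisymm (Ideal.map_le_iff_le_comap.mpr fun y hy i ↦ Ideal.mem_map_of_mem _ hy) ?_
  simp_rw [hx]
  rw [Ideal.pi_span, Ideal.span_singleton_le_iff_mem]
  exact Ideal.mem_map_of_mem (algebraMap S (∀ i, B i)) hxJ

theorem eventually_relLength_pow_succ_eq_sum_length [Fintype ι] [IsLocalRing S]
    (hι : ENat.card ι ≤ ENat.card (ResidueField S))
    (hsurj : ∀ i, Function.Surjective (algebraMap S (B i)))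
    (hinj : Function.Injective (algebraMap S (∀ i, B i)))
    (hfin : IsFiniteLength S ((∀ i, B i) ⧸ LinearMap.range (Algebra.linearMap S (∀ i, B i))))
    {J : Ideal S} (hreg : ∃ y ∈ J, algebraMap S (∀ i, B i) y ∈ nonZeroDivisors (∀ i, B i))
    (hJ : ∀ i, (J.map (algebraMap S (B i))).IsPrincipal) :
    ∀ᶠ r in atTop, relLength (J ^ (r + 1)) (J ^ r) =
      ∑ i, Module.length (B i) (B i ⧸ J.map (algebraMap S (B i))) := by
  obtain ⟨x, hxJ, hx⟩ := exists_mem_forall_map_eq_span_singleton hι hsurj J hJ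
  have map_eq_pi := map_algebraMap_pi_eq_pi_map hxJ hx
  have map_eq_span :
      J.map (algebraMap S (∀ i, B i)) = Ideal.span {algebraMap S (∀ i, B i) x} := by
    rw [map_eq_pi, funext hx]
    exact Ideal.pi_span
  have x_mem_nonZeroDivisors : algebraMap S (∀ i, B i) x ∈ nonZeroDivisors (∀ i, B i) := by
    obtain ⟨y, hyJ, hy⟩ := hreg
    have dvd := Ideal.mem_map_of_mem (algebraMap S (∀ i, B i)) hyJ
    rw [map_eq_span, Ideal.mem_span_singleton] at dvd
    obtain ⟨b, hb⟩ := dvd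
    rw [hb] at hy
    exact (mul_mem_nonZeroDivisors.mp hy).1
  rw [← length_quotient_pi hsurj, ← map_eq_pi]
  exact eventually_relLength_pow_succ_eq_length_quotient_map hinj hfin hxJ x_mem_nonZeroDivisors
    map_eq_span

end Product

lemma isFiniteLength_of_finite {R M : Type*} [Ring R] [AddCommGroup M] [Module R M] [Finite M] :
    IsFiniteLength R M :=
  isFiniteLength_iff_isNoetherian_isArtinian.mpr ⟨inferInstance, inferInstance⟩

lemma isFiniteLength_of_tower {R S M : Type*} [CommRing R] [Ring S] [Algebra R S] [AddCommGroup M]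
    [Module R M] [Module S M] [IsScalarTower R S M] (h : IsFiniteLength R M) :
    IsFiniteLength S M := by
  rw [isFiniteLength_iff_isNoetherian_isArtinian] at h ⊢
  exact ⟨isNoetherian_of_tower R h.1, isArtinian_of_tower R h.2⟩

lemma exists_ne_zero_algebraMap_mem {R S : Type*} [CommRing R] [IsDomain R] (hR : ¬ IsField R)
    [CommRing S] [Algebra R S] {J : Ideal S} [IsArtinian R (S ⧸ J)] :
    ∃ a : R, a ≠ 0 ∧ algebraMap R S a ∈ J := by
  by_contra! h
  have algebraMap_injective : Function.Injective (Algebra.linearMap R (S ⧸ J)) :=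
    (injective_iff_map_eq_zero _).mpr fun a ha ↦ by
      by_contra ha0
      exact h a ha0 (Ideal.Quotient.eq_zero_iff_mem.mp ha)
  have : IsArtinianRing R := isArtinian_of_injective _ algebraMap_injective
  exact hR (IsArtinianRing.isField_of_isDomain R)

lemma moduleLength_eq_coe_length (R M : Type*) [Ring R] [AddCommGroup M] [Module R M] :
    moduleLength R M = (Module.length R M : ℕ∞) :=
  (Module.coe_length R M).symm

section Subalgebra

variable {R : Type} [CommRing R] {s : ℕ} {n : Fin s → ℕ} {T : Subalgebra R (A R s n)}

lemma ψ_surjective (i : Fin s) : Function.Surjective (ψ R s n T i) := by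
  rintro ⟨_, y, hy, rfl⟩
  exact ⟨⟨y, hy⟩, rfl⟩

lemma Ψ_injective : Function.Injective (Ψ R s n T) := fun _ _ h ↦
  Subtype.ext <| funext fun i ↦ congrArg Subtype.val (congrFun h i)

/-- `T_i` as a `T`-algebra through the projection `ψ_i`; then `Ψ` is the structure map of
`∏ i, T_i`. -/
local instance algebraTi (i : Fin s) : Algebra T (Ti R s n T i) :=
  (ψ R s n T i).toRingHom.toAlgebra

local instance isScalarTowerTi (i : Fin s) : IsScalarTower R T (Ti R s n T i) :=
  .of_algebraMap_eq fun a ↦ ((ψ R s n T i).commutes a).symm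

lemma isFiniteLength_quotient_range_Ψ (hT : IsFiniteLength R (A R s n ⧸ T.toSubmodule)) :
    IsFiniteLength T
      ((∀ i, Ti R s n T i) ⧸ LinearMap.range (Algebra.linearMap T (∀ i, Ti R s n T i))) := by
  let C := LinearMap.range (Algebra.linearMap T (∀ i, Ti R s n T i))
  let incl : (∀ i, Ti R s n T i) →ₗ[R] A R s n := LinearMap.piMap fun i ↦ (Ti R s n T i).val
  have comap_incl : T.toSubmodule.comap incl = C.restrictScalars R := by
    ext b
    constructor
    · intro hb
      exact ⟨⟨incl b, hb⟩, rfl⟩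
    · rintro ⟨y, rfl⟩
      exact y.2
  have : IsFiniteLength R ((∀ i, Ti R s n T i) ⧸ C.restrictScalars R) := by
    refine hT.of_injective (f := Submodule.mapQ _ _ incl comap_incl.ge) ?_
    rw [← LinearMap.ker_eq_bot, Submodule.ker_mapQ, comap_incl, Submodule.mkQ_map_self]
  exact isFiniteLength_of_tower (R := R)
    ((Submodule.Quotient.restrictScalarsEquiv R C).isFiniteLength this)

variable [IsDomain R]

lemma card_residueField_le [IsLocalRing R] [IsLocalRing T] :
    ENat.card (ResidueField R) ≤ ENat.card (ResidueField T) := by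
  have : Algebra.IsIntegral R T := .of_injective T.val Subtype.val_injective
  exact ENat.card_le_card_of_injective (algebraMap (ResidueField R) (ResidueField T)).injective

lemma algebraMap_mem_nonZeroDivisors {a : R} (ha : a ≠ 0) :
    algebraMap T (∀ i, Ti R s n T i) (algebraMap R T a) ∈ nonZeroDivisors (∀ i, Ti R s n T i) := by
  rw [← IsScalarTower.algebraMap_apply R T]
  refine mem_nonZeroDivisors_iff_right.mpr fun b hb ↦ ?_
  rw [mul_comm, ← Algebra.smul_def] at hb
  exact (smul_eq_zero.mp hb).resolve_left ha

theorem statement_general [IsLocalRing R] [IsLocalRing T] (hR : ¬ IsField R)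
    (hT : IsFiniteLength R (A R s n ⧸ T.toSubmodule))
    {J : Ideal T} (hJ : IsFiniteLength R (T ⧸ J)) (hs : s ≤ ENat.card (ResidueField R))
    (hprin : ∀ i, (Ji R s n T J i).IsPrincipal) :
    ∃ r₀ : ℕ, ∀ r : ℕ, r₀ ≤ r →
      hilbertSamuel J r =
        ∑ i, moduleLength (Ti R s n T i) (Ti R s n T i ⧸ Ji R s n T J i) := by
  have card_le : ENat.card (Fin s) ≤ ENat.card (ResidueField T) :=
    le_trans (by simpa using hs) card_residueField_le
  have regular : ∃ y ∈ J, algebraMap T (∀ i, Ti R s n T i) y ∈ nonZeroDivisors _ := by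
    have := (isFiniteLength_iff_isNoetherian_isArtinian.mp hJ).2
    obtain ⟨a, ha, haJ⟩ := exists_ne_zero_algebraMap_mem hR (J := J)
    exact ⟨_, haJ, algebraMap_mem_nonZeroDivisors ha⟩
  obtain ⟨r₀, hr₀⟩ := eventually_atTop.mp <| eventually_relLength_pow_succ_eq_sum_length card_le
    ψ_surjective Ψ_injective (isFiniteLength_quotient_range_Ψ hT) regular hprin
  refine ⟨r₀, fun r hr ↦ ?_⟩
  simp only [hilbertSamuel, moduleLength_eq_coe_length]
  exact (congrArg _ (hr₀ r hr)).trans (map_sum WithBot.addHom _ _)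

end Subalgebra

/-- (Corollary 2.7.)  If the residue field of `O` has at least `s` elements and each
`J_i ⊆ T_i` is principal, then `e(J, T) = ∑ i, length_{T_i} (T_i/J_i)`: for all sufficiently
large `r`, `length_T (J^r/J^(r+1)) = ∑ i, length_{T_i} (T_i/J_i)`. -/
theorem statement
    -- `O` is the valuation ring of a finite extension of `ℚ_p`:
    [IsAdicComplete (maximalIdeal O) O] [Finite (ResidueField O)]
    [CharP (ResidueField O) p]
    (hs : 0 < s) (hn : ∀ i, 0 < n i)
    -- `T` is a local complete `O`-subalgebra of full rank in `A`:
    [IsLocalRing T] [IsAdicComplete (maximalIdeal T) T]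
    (hfullrank : Finite ((A O s n) ⧸ T.toSubmodule))
    -- `J ⊆ T` is an ideal of finite index:
    (J : Ideal T) (hJ : Finite (T ⧸ J))
    -- the residue field of `O` has at least `s` elements:
    (hres : s ≤ Nat.card (ResidueField O))
    -- each `J_i` is principal:
    (hprin : ∀ i, (Ji O s n T J i).IsPrincipal) :
    ∃ r₀ : ℕ, ∀ r : ℕ, r₀ ≤ r →
      hilbertSamuel J r =
        ∑ i, moduleLength (Ti O s n T i) ((Ti O s n T i) ⧸ (Ji O s n T J i)) := by
  exact statement_general (IsDiscreteValuationRing.not_isField O) isFiniteLength_of_finite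
    isFiniteLength_of_finite (by rw [ENat.card_eq_coe_natCard]; exact_mod_cast hres) hprin

end Stmt4
end
end
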